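/- arXiv:2411.14601 — 9 statements merged into one kernel-verified Lean document; each statement's English description precedes it below -/
import Mathlib

section
/- Let f : ℝ^{dx} → ℝ be differentiable, μx-strongly convex and Lx-smooth with Lx > μx ≥ 0, let g : ℝ^{dy} → ℝ be differentiable, μy-strongly convex and Ly-smooth with Ly > μy ≥ 0, and let B ∈ ℝ^{dy×dx} satisfy the spectral assumption with constants Lxy > μxy, μyx ≥ 0. Assume δx := μx + μxy²/Ly > 0 and δy := μy + μyx²/Lx > 0. Then the solution set S := {(x,y) : ∇f(x) + Bᵀy = 0 and ∇g(y) − Bx = 0} is nonempty, and for every (x*,y*) ∈ S one has S = (x* + Vx) × (y* + Vy), where Vx = {0} if μx > 0 and Vx = ker B if μx = 0, and Vy = {0} if μy > 0 and Vy = ker Bᵀ if μy = 0. -/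
open scoped RealInnerProductSpace Matrix

/-!
The optimality system is the equation `R z = 0` for `R (x, y) = (∇f x + Bᵀ y, ∇g y - B x)`, a
monotone operator because the two bilinear terms cancel in `⟪R z - R w, z - w⟫`. The gradients are
cocoercive, so `R` is constant along `V = Vx × Vy`, and it takes values in `Vᗮ`.

On `Vᗮ` the operator `R` is bounded below: `⟪R z - R w, z - w⟫` controls `‖z - w‖` where strong
convexity holds, and by cocoercivity it also controls `∇g y - ∇g y'`, hence `B (x - x')` up to the
second component of `R z - R w`; this bounds `x - x'` when `μx = 0`, since `B` is then bounded below
on `Vxᗮ`. The roles of `x` and `y` are symmetric. A monotone Lipschitz operator which is bounded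
below has a contractive resolvent, whose fixed point is a zero of `R`; this zero is unique in `Vᗮ`,
so the solution set is a coset of `V`.
-/

section Operators

variable {E : Type*} [NormedAddCommGroup E] [InnerProductSpace ℝ E]

/-- `T` is `μ`-strongly monotone; `μ = 0` is plain monotonicity. -/
def StronglyMonotone (μ : ℝ) (T : E → E) : Prop :=
  ∀ x y, μ * ‖x - y‖ ^ 2 ≤ ⟪T x - T y, x - y⟫

/-- `T` is cocoercive, in the normalization satisfied by the gradient of a convex `L`-smooth
function (often called `1 / L`-cocoercivity). -/
def Cocoercive (L : ℝ) (T : E → E) : Prop :=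
  ∀ x y, ‖T x - T y‖ ^ 2 ≤ L * ⟪T x - T y, x - y⟫

/-- The Bregman divergence of `f` when `f'` is its gradient. -/
def bregmanDiv (f : E → ℝ) (f' : E → E) (x x' : E) : ℝ :=
  f x - f x' - ⟪f' x', x - x'⟫

theorem bregmanDiv_add_swap (f : E → ℝ) (f' : E → E) (x y : E) :
    bregmanDiv f f' x y + bregmanDiv f f' y x = ⟪f' x - f' y, x - y⟫ := by
  simp only [bregmanDiv, inner_sub_left, inner_sub_right]
  ring

theorem bregmanDiv_three_point (f : E → ℝ) (f' : E → E) (w x y : E) :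
    bregmanDiv f f' w y =
      bregmanDiv f f' w x + bregmanDiv f f' x y + ⟪f' x - f' y, w - x⟫ := by
  simp only [bregmanDiv, inner_sub_left, inner_sub_right]
  ring

theorem stronglyMonotone_of_le_bregmanDiv {f : E → ℝ} {f' : E → E} {μ : ℝ}
    (h : ∀ x y, μ / 2 * ‖x - y‖ ^ 2 ≤ bregmanDiv f f' x y) : StronglyMonotone μ f' := by
  intro x y
  have hyx := h y x
  rw [norm_sub_rev] at hyx
  linarith [h x y, bregmanDiv_add_swap f f' x y]

theorem norm_sub_sq_le_bregmanDiv {f : E → ℝ} {f' : E → E} {L : ℝ} (hL : 0 < L)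
    (h_nonneg : ∀ x y, 0 ≤ bregmanDiv f f' x y)
    (h_le : ∀ x y, bregmanDiv f f' x y ≤ L / 2 * ‖x - y‖ ^ 2) (x y : E) :
    ‖f' x - f' y‖ ^ 2 ≤ 2 * L * bregmanDiv f f' x y := by
  set d := f' x - f' y with hd
  -- One gradient step from `x` for the convex function `bregmanDiv f f' · y`.
  have step_sub : x - L⁻¹ • d - x = -(L⁻¹ • d) := by abel
  have step_le := h_le (x - L⁻¹ • d) x
  have three_point := bregmanDiv_three_point f f' (x - L⁻¹ • d) x y
  rw [step_sub, norm_neg, norm_smul, mul_pow, Real.norm_eq_abs, sq_abs] at step_le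
  rw [step_sub, ← hd, inner_neg_right, inner_smul_right, real_inner_self_eq_norm_sq]
    at three_point
  have descent : 0 ≤ bregmanDiv f f' x y - L⁻¹ / 2 * ‖d‖ ^ 2 := by
    calc 0 ≤ bregmanDiv f f' (x - L⁻¹ • d) y := h_nonneg _ _
      _ ≤ L / 2 * (L⁻¹ ^ 2 * ‖d‖ ^ 2) + bregmanDiv f f' x y - L⁻¹ * ‖d‖ ^ 2 := by linarith
      _ = bregmanDiv f f' x y - L⁻¹ / 2 * ‖d‖ ^ 2 := by field_simp; ring
  calc ‖d‖ ^ 2 = 2 * L * (L⁻¹ / 2 * ‖d‖ ^ 2) := by field_simp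
    _ ≤ 2 * L * bregmanDiv f f' x y := by gcongr; linarith

theorem cocoercive_of_bregmanDiv_le {f : E → ℝ} {f' : E → E} {L : ℝ} (hL : 0 < L)
    (h_nonneg : ∀ x y, 0 ≤ bregmanDiv f f' x y)
    (h_le : ∀ x y, bregmanDiv f f' x y ≤ L / 2 * ‖x - y‖ ^ 2) : Cocoercive L f' := by
  intro x y
  have hxy := norm_sub_sq_le_bregmanDiv hL h_nonneg h_le x y
  have hyx := norm_sub_sq_le_bregmanDiv hL h_nonneg h_le y x
  rw [norm_sub_rev] at hyx
  rw [← bregmanDiv_add_swap f]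
  linarith

theorem stronglyMonotone_and_cocoercive_of_bregmanDiv {f : E → ℝ} {f' : E → E} {μ L : ℝ}
    (hμ : 0 ≤ μ) (hL : μ < L) (h_convex : ∀ x y, μ / 2 * ‖x - y‖ ^ 2 ≤ bregmanDiv f f' x y)
    (h_smooth : ∀ x y, |bregmanDiv f f' x y| ≤ L / 2 * ‖x - y‖ ^ 2) :
    StronglyMonotone μ f' ∧ Cocoercive L f' :=
  ⟨stronglyMonotone_of_le_bregmanDiv h_convex, cocoercive_of_bregmanDiv_le (hμ.trans_lt hL)
    (fun x y => le_trans (by positivity) (h_convex x y))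
    fun x y => (le_abs_self _).trans (h_smooth x y)⟩

theorem StronglyMonotone.inner_nonneg {μ : ℝ} {T : E → E} (hT : StronglyMonotone μ T)
    (hμ : 0 ≤ μ) (x y : E) : 0 ≤ ⟪T x - T y, x - y⟫ :=
  le_trans (by positivity) (hT x y)

theorem Cocoercive.stronglyMonotone_zero {L : ℝ} {T : E → E} (hT : Cocoercive L T)
    (hL : 0 ≤ L) : StronglyMonotone 0 T := by
  intro x y
  have h := hT x y
  rw [zero_mul]
  rcases hL.eq_or_lt with rfl | hL
  · rw [zero_mul, sq_nonpos_iff, norm_eq_zero] at h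
    rw [h, inner_zero_left]
  · exact nonneg_of_mul_nonneg_right ((sq_nonneg _).trans h) hL

theorem Cocoercive.lipschitzWith {L : ℝ} {T : E → E} (hT : Cocoercive L T) (hL : 0 ≤ L) :
    LipschitzWith L.toNNReal T := by
  refine LipschitzWith.of_dist_le_mul fun x y => ?_
  rw [Real.coe_toNNReal L hL, dist_eq_norm, dist_eq_norm]
  have h : ‖T x - T y‖ * ‖T x - T y‖ ≤ L * ‖x - y‖ * ‖T x - T y‖ := by
    calc ‖T x - T y‖ * ‖T x - T y‖ ≤ L * ⟪T x - T y, x - y⟫ := by simpa [sq] using hT x y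
      _ ≤ L * (‖T x - T y‖ * ‖x - y‖) := by gcongr; exact real_inner_le_norm _ _
      _ = L * ‖x - y‖ * ‖T x - T y‖ := by ring
  rcases (norm_nonneg (T x - T y)).eq_or_lt with h0 | h0
  · rw [← h0]; positivity
  · exact le_of_mul_le_mul_right h h0

theorem Cocoercive.apply_add_eq {L : ℝ} {T : E → E} {V : Submodule ℝ E} (hT : Cocoercive L T)
    (hV : ∀ x, T x ∈ Vᗮ) (x : E) {v : E} (hv : v ∈ V) : T (x + v) = T x := by
  have h_inner : ⟪T (x + v) - T x, v⟫ = 0 :=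
    Submodule.inner_left_of_mem_orthogonal hv (sub_mem (hV _) (hV _))
  have h := hT (x + v) x
  rw [add_sub_cancel_left, h_inner, mul_zero] at h
  exact sub_eq_zero.mp (norm_eq_zero.mp (sq_eq_zero_iff.mp (le_antisymm h (sq_nonneg _))))

theorem norm_sub_sq_le_two_mul (x y : E) : ‖x - y‖ ^ 2 ≤ 2 * (‖x‖ ^ 2 + ‖y‖ ^ 2) := by
  linarith [parallelogram_law_with_norm ℝ x y, sq_nonneg ‖x + y‖]

theorem le_mul_of_sq_le {K a b : ℝ} (hK : 0 ≤ K) (hb : 0 ≤ b)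
    (h : a ^ 2 ≤ K * (a * b + b ^ 2)) : a ≤ (K + 1) * b := by
  by_contra! hab
  have ha : 0 < a := (by positivity : 0 ≤ (K + 1) * b).trans_lt hab
  nlinarith [mul_pos ha (sub_pos.mpr hab), mul_nonneg hb (sub_pos.mpr hab).le]

end Operators

section MonotoneZeros

open scoped NNReal

variable {H : Type*} [NormedAddCommGroup H] [InnerProductSpace ℝ H] [CompleteSpace H]

theorem exists_fixedPoint_of_norm_sub_sq_le {E : Type*} [NormedAddCommGroup E] [CompleteSpace E]
    {k : ℝ} {T : E → E} (hk : k < 1) (hT : ∀ x y, ‖T x - T y‖ ^ 2 ≤ k * ‖x - y‖ ^ 2) :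
    ∃ x, T x = x := by
  have hc : ContractingWith (NNReal.sqrt k.toNNReal) T := by
    refine ⟨by rwa [← NNReal.sqrt_one, NNReal.sqrt_lt_sqrt, Real.toNNReal_lt_one],
      LipschitzWith.of_dist_le_mul fun x y => ?_⟩
    rw [dist_eq_norm, dist_eq_norm]
    refine le_of_sq_le_sq ?_ (by positivity)
    rw [mul_pow, ← NNReal.coe_pow, NNReal.sq_sqrt]
    exact (hT x y).trans (by gcongr; exact Real.le_coe_toNNReal k)
  exact ⟨_, hc.fixedPoint_isFixedPt⟩

theorem StronglyMonotone.surjective {μ : ℝ} {K : ℝ≥0} {T : H → H} (hT : StronglyMonotone μ T)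
    (hμ : 0 < μ) (hK : LipschitzWith K T) : Function.Surjective T := by
  intro b
  set M : ℝ := K + μ
  have hM : 0 < M := by positivity
  set t := μ / M ^ 2 with ht
  have ht0 : 0 < t := by positivity
  have contraction (x y : H) : ‖(x - t • (T x - b)) - (y - t • (T y - b))‖ ^ 2 ≤
      (1 - t * μ) * ‖x - y‖ ^ 2 := by
    have h_lip : ‖T x - T y‖ ^ 2 ≤ M ^ 2 * ‖x - y‖ ^ 2 := by
      rw [← mul_pow]
      gcongr
      exact (hK.norm_sub_le x y).trans (by gcongr; exact le_add_of_nonneg_right hμ.le)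
    have h_sub : (x - t • (T x - b)) - (y - t • (T y - b)) = (x - y) - t • (T x - T y) := by
      module
    calc ‖(x - t • (T x - b)) - (y - t • (T y - b))‖ ^ 2
        = ‖x - y‖ ^ 2 - 2 * t * ⟪T x - T y, x - y⟫ + t ^ 2 * ‖T x - T y‖ ^ 2 := by
          rw [h_sub, norm_sub_sq_real, inner_smul_right, norm_smul, mul_pow, Real.norm_eq_abs,
            sq_abs, real_inner_comm]
          ring
      _ ≤ ‖x - y‖ ^ 2 - 2 * t * (μ * ‖x - y‖ ^ 2) + t ^ 2 * (M ^ 2 * ‖x - y‖ ^ 2) := by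
          gcongr
          exact hT x y
      _ = (1 - t * μ) * ‖x - y‖ ^ 2 := by rw [ht]; field_simp; ring
  obtain ⟨x, hx⟩ := exists_fixedPoint_of_norm_sub_sq_le (by linarith [mul_pos ht0 hμ]) contraction
  exact ⟨x, sub_eq_zero.mp ((smul_eq_zero.mp (sub_eq_self.mp hx)).resolve_left ht0.ne')⟩

-- The lower bound `hC` on `T` makes the resolvent `(1 + T)⁻¹` a contraction.
theorem StronglyMonotone.exists_eq_zero {K C : ℝ≥0} {T : H → H} (hT : StronglyMonotone 0 T)
    (hK : LipschitzWith K T) (hC : AntilipschitzWith C T) : ∃ x, T x = 0 := by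
  have h_mono (x y : H) : 0 ≤ ⟪T x - T y, x - y⟫ := hT.inner_nonneg le_rfl x y
  have h_split (x y : H) : x + T x - (y + T y) = (x - y) + (T x - T y) := by abel
  have h_strong : StronglyMonotone 1 fun x => x + T x := by
    intro x y
    rw [h_split, inner_add_left, real_inner_self_eq_norm_sq]
    linarith [h_mono x y]
  obtain ⟨J, hJ⟩ := (h_strong.surjective one_pos (LipschitzWith.id.add hK)).hasRightInverse
  set q : ℝ := C ^ 2 / (C ^ 2 + 1)
  have h_expand (x y : H) : ‖x - y‖ ^ 2 ≤ q * ‖x + T x - (y + T y)‖ ^ 2 := by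
    have h_anti : ‖x - y‖ ^ 2 ≤ C ^ 2 * ‖T x - T y‖ ^ 2 := by
      rw [← mul_pow]
      gcongr
      simpa [dist_eq_norm] using hC.le_mul_dist x y
    have h_sum : ‖x - y‖ ^ 2 + ‖T x - T y‖ ^ 2 ≤ ‖x + T x - (y + T y)‖ ^ 2 := by
      rw [h_split, norm_add_sq_real, real_inner_comm]
      linarith [h_mono x y]
    rw [div_mul_eq_mul_div, le_div_iff₀ (by positivity)]
    calc ‖x - y‖ ^ 2 * (C ^ 2 + 1) ≤ C ^ 2 * (‖x - y‖ ^ 2 + ‖T x - T y‖ ^ 2) := by linarith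
      _ ≤ C ^ 2 * ‖x + T x - (y + T y)‖ ^ 2 := by gcongr
  obtain ⟨x, hx⟩ := exists_fixedPoint_of_norm_sub_sq_le (k := q) (T := J)
    ((div_lt_one (by positivity)).mpr (lt_add_one _))
    fun x y => by simpa only [hJ x, hJ y] using h_expand (J x) (J y)
  exact ⟨x, by simpa [hx] using hJ x⟩

theorem StronglyMonotone.exists_eq_zero_of_orthogonal {K C : ℝ≥0} {T : H → H}
    {V : Submodule ℝ H} (hT : StronglyMonotone 0 T) (hK : LipschitzWith K T)
    (hV : ∀ x, T x ∈ Vᗮ) (hC : ∀ x y, x - y ∈ Vᗮ → ‖x - y‖ ≤ C * ‖T x - T y‖) :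
    ∃ x, T x = 0 := by
  let R : Vᗮ → Vᗮ := fun x => ⟨T x, hV x⟩
  have hR : StronglyMonotone 0 R := fun x y => hT x y
  have hR_lip : LipschitzWith K R := fun x y => hK x y
  have hR_anti : AntilipschitzWith C R :=
    AntilipschitzWith.of_le_mul_dist fun x y => by
      simpa only [dist_eq_norm] using! hC x y (sub_mem x.2 y.2)
  obtain ⟨x, hx⟩ := hR.exists_eq_zero hR_lip hR_anti
  exact ⟨x, congrArg Subtype.val hx⟩

end MonotoneZeros

theorem apply_eq_zero_iff_sub_mem {H : Type*} [NormedAddCommGroup H] [InnerProductSpace ℝ H]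
    {C : ℝ} {T : H → H} {V : Submodule ℝ H} [V.HasOrthogonalProjection]
    (h_add : ∀ x, ∀ v ∈ V, T (x + v) = T x)
    (hC : ∀ x y, x - y ∈ Vᗮ → ‖x - y‖ ≤ C * ‖T x - T y‖) {x y : H} (hx : T x = 0) :
    T y = 0 ↔ y - x ∈ V := by
  refine ⟨fun hy => ?_, fun h => by rw [← add_sub_cancel x y, h_add _ _ h, hx]⟩
  obtain ⟨v, hv, u, hu, h_decomp⟩ := V.exists_add_mem_mem_orthogonal (y - x)
  have hTu : T (x + u) = 0 := by
    rw [← h_add _ v hv, ← hy, add_assoc, add_comm u v, ← h_decomp, add_sub_cancel]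
  have hu_norm := hC (x + u) x (by simpa using hu)
  rw [hTu, hx, add_sub_cancel_left, sub_zero, norm_zero, mul_zero] at hu_norm
  rwa [h_decomp, norm_le_zero_iff.mp hu_norm, add_zero]

section Regular

variable {E F : Type*} [NormedAddCommGroup E] [InnerProductSpace ℝ E]
  [NormedAddCommGroup F] [InnerProductSpace ℝ F]

/-- The product of two submodules, inside the Hilbert space `WithLp 2 (E × F)`. -/
def l2Prod (V : Submodule ℝ E) (W : Submodule ℝ F) :
    Submodule ℝ (WithLp 2 (E × F)) :=
  (V.prod W).comap (WithLp.linearEquiv 2 ℝ (E × F)).toLinearMap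

theorem mem_l2Prod_orthogonal {V : Submodule ℝ E} {W : Submodule ℝ F}
    {z : WithLp 2 (E × F)} : z ∈ (l2Prod V W)ᗮ ↔ z.fst ∈ Vᗮ ∧ z.snd ∈ Wᗮ := by
  simp only [Submodule.mem_orthogonal, WithLp.prod_inner_apply]
  refine ⟨fun h => ⟨fun v hv => ?_, fun w hw => ?_⟩, fun h u hu => ?_⟩
  · simpa using h (WithLp.toLp 2 (v, 0)) ⟨hv, W.zero_mem⟩
  · simpa using h (WithLp.toLp 2 (0, w)) ⟨V.zero_mem, hw⟩
  · exact (congrArg₂ (· + ·) (h.1 _ hu.1) (h.2 _ hu.2)).trans (add_zero 0)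

theorem isClosed_l2Prod {V : Submodule ℝ E} {W : Submodule ℝ F}
    (hV : IsClosed (V : Set E)) (hW : IsClosed (W : Set F)) :
    IsClosed (l2Prod V W : Set (WithLp 2 (E × F))) :=
  (hV.prod hW).preimage (WithLp.prod_continuous_ofLp 2 E F)

/-- `V` is the degeneracy space of `T` relative to `A`: neither `A` nor `T` sees `V`, and
orthogonally to `V` the monotonicity of `T` together with `A` controls the norm. -/
structure IsRegularModulo (T : E → E) (A : E →L[ℝ] F) (V : Submodule ℝ E) : Prop where
  isClosed : IsClosed (V : Set E)
  map_eq_zero : ∀ v ∈ V, A v = 0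
  apply_mem_orthogonal : ∀ x, T x ∈ Vᗮ
  exists_norm_sub_sq_le : ∃ c, 0 ≤ c ∧ ∀ x y, x - y ∈ Vᗮ →
    ‖x - y‖ ^ 2 ≤ c * (⟪T x - T y, x - y⟫ + ‖A (x - y)‖ ^ 2)

theorem StronglyMonotone.isRegularModulo_bot {μ : ℝ} {T : E → E} (hT : StronglyMonotone μ T)
    (hμ : 0 < μ) (A : E →L[ℝ] F) : IsRegularModulo T A ⊥ where
  isClosed := isClosed_singleton
  map_eq_zero := by simp
  apply_mem_orthogonal := by simp
  exists_norm_sub_sq_le := by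
    refine ⟨μ⁻¹, by positivity, fun x y _ => ?_⟩
    rw [le_inv_mul_iff₀ hμ]
    linarith [hT x y, sq_nonneg ‖A (x - y)‖]

theorem StronglyMonotone.isRegularModulo_ker {ν : ℝ} {T : E → E} {A : E →L[ℝ] F}
    (hT : StronglyMonotone 0 T) (hν : 0 < ν) (hT_ker : ∀ x, T x ∈ A.kerᗮ)
    (hA : ∀ x ∈ A.kerᗮ, ν * ‖x‖ ≤ ‖A x‖) : IsRegularModulo T A A.ker where
  isClosed := A.isClosed_ker
  map_eq_zero := fun _ hv => hv
  apply_mem_orthogonal := hT_ker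
  exists_norm_sub_sq_le := by
    refine ⟨(ν ^ 2)⁻¹, by positivity, fun x y hxy => ?_⟩
    rw [le_inv_mul_iff₀ (by positivity), ← mul_pow]
    calc (ν * ‖x - y‖) ^ 2 ≤ ‖A (x - y)‖ ^ 2 := by gcongr; exact hA _ hxy
      _ ≤ ⟪T x - T y, x - y⟫ + ‖A (x - y)‖ ^ 2 :=
        le_add_of_nonneg_left (hT.inner_nonneg le_rfl x y)

theorem ker_eq_bot_of_lower_bound {ν : ℝ} {A : E →L[ℝ] F} (hν : 0 < ν)
    (hA : ∀ x, ν * ‖x‖ ≤ ‖A x‖) : A.ker = ⊥ := by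
  refine (Submodule.eq_bot_iff _).mpr fun x (hx : A x = 0) => norm_le_zero_iff.mp ?_
  have h := hA x
  rw [hx, norm_zero] at h
  exact nonpos_of_mul_nonpos_right h hν

end Regular

section Saddle

open scoped InnerProduct

variable {E F : Type*} [NormedAddCommGroup E] [InnerProductSpace ℝ E] [CompleteSpace E]
  [NormedAddCommGroup F] [InnerProductSpace ℝ F] [CompleteSpace F]

theorem StronglyMonotone.exists_isRegularModulo {μ ν L : ℝ} {T : E → E} {A : E →L[ℝ] F}
    {V : Set E} (hT : StronglyMonotone μ T) (hμ : 0 ≤ μ) (hν : 0 ≤ ν)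
    (hδ : 0 < μ + ν ^ 2 / L)
    (hA : ((∀ x, T x ∈ (A†).range) ∧ ∀ x ∈ A.kerᗮ, ν * ‖x‖ ≤ ‖A x‖) ∨
      ∀ x, ν * ‖x‖ ≤ ‖A x‖)
    (hV_pos : 0 < μ → V = {0}) (hV_zero : μ = 0 → V = A.ker) :
    ∃ V' : Submodule ℝ E, V = V' ∧ IsRegularModulo T A V' := by
  rcases hμ.eq_or_lt with rfl | hμ
  · have hν_pos : 0 < ν := hν.lt_of_ne fun h => by simp [← h] at hδ
    refine ⟨A.ker, hV_zero rfl, ?_⟩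
    rcases hA with ⟨hT_range, hA⟩ | hA
    · refine hT.isRegularModulo_ker hν_pos (fun x => ?_) hA
      rw [A.orthogonal_ker]
      exact Submodule.le_topologicalClosure _ (hT_range x)
    · exact hT.isRegularModulo_ker hν_pos
        (by simp [ker_eq_bot_of_lower_bound hν_pos hA]) fun x _ => hA x
  · exact ⟨⊥, by simpa using hV_pos hμ, hT.isRegularModulo_bot hμ A⟩

/-- The solution set of the optimality system `T x + A† y = 0`, `S y - A x = 0`; when `T` and `S`
are the gradients of `f` and `g`, its elements are the saddle points of
`f x + ⟪y, A x⟫ - g y`. -/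
def saddleZeros (T : E → E) (S : F → F) (A : E →L[ℝ] F) : Set (E × F) :=
  {p | T p.1 + (A†) p.2 = 0 ∧ S p.2 - A p.1 = 0}

/-- The operator whose zeros are `saddleZeros T S A`, on the Hilbert space `WithLp 2 (E × F)`. -/
noncomputable def saddleOperator (T : E → E) (S : F → F) (A : E →L[ℝ] F) (z : WithLp 2 (E × F)) :
    WithLp 2 (E × F) :=
  WithLp.toLp 2 (T z.fst + (A†) z.snd, S z.snd - A z.fst)

variable {T : E → E} {S : F → F} {A : E →L[ℝ] F} {V : Submodule ℝ E} {W : Submodule ℝ F}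

theorem mem_saddleZeros_iff {p : E × F} :
    p ∈ saddleZeros T S A ↔ saddleOperator T S A (WithLp.toLp 2 p) = 0 := by
  simp [saddleZeros, saddleOperator, Prod.ext_iff]

theorem inner_saddleOperator_sub (T : E → E) (S : F → F) (A : E →L[ℝ] F)
    (z w : WithLp 2 (E × F)) :
    ⟪saddleOperator T S A z - saddleOperator T S A w, z - w⟫ =
      ⟪T z.fst - T w.fst, z.fst - w.fst⟫ + ⟪S z.snd - S w.snd, z.snd - w.snd⟫ := by
  have h_cross : ⟪(A†) (z.snd - w.snd), z.fst - w.fst⟫ = ⟪A (z.fst - w.fst), z.snd - w.snd⟫ := by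
    rw [A.adjoint_inner_left, real_inner_comm]
  simp only [saddleOperator, WithLp.prod_inner_apply, WithLp.ofLp_fst, WithLp.ofLp_snd,
    WithLp.sub_fst, WithLp.sub_snd, map_sub, inner_sub_left, inner_add_left] at h_cross ⊢
  linarith

theorem stronglyMonotone_saddleOperator (hT : StronglyMonotone 0 T) (hS : StronglyMonotone 0 S)
    (A : E →L[ℝ] F) : StronglyMonotone 0 (saddleOperator T S A) := by
  intro z w
  rw [inner_saddleOperator_sub, zero_mul]
  exact add_nonneg (hT.inner_nonneg le_rfl _ _) (hS.inner_nonneg le_rfl _ _)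

theorem exists_lipschitzWith_saddleOperator {K K' : NNReal} (hT : LipschitzWith K T)
    (hS : LipschitzWith K' S) (A : E →L[ℝ] F) :
    ∃ C, LipschitzWith C (saddleOperator T S A) :=
  have h_prod := LipschitzWith.prodMk
    ((hT.comp LipschitzWith.prod_fst).add ((A†).lipschitz.comp LipschitzWith.prod_snd))
    ((hS.comp LipschitzWith.prod_snd).sub (A.lipschitz.comp LipschitzWith.prod_fst))
  ⟨_, (WithLp.prod_lipschitzWith_toLp 2 E F).comp
    (h_prod.comp (WithLp.prod_lipschitzWith_ofLp 2 E F))⟩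

theorem saddleOperator_mem_orthogonal (hT : IsRegularModulo T A V)
    (hS : IsRegularModulo S (A†) W) (z : WithLp 2 (E × F)) :
    saddleOperator T S A z ∈ (l2Prod V W)ᗮ := by
  have hV : (A†) z.snd ∈ Vᗮ := fun v hv => by
    rw [A.adjoint_inner_right, hT.map_eq_zero v hv, inner_zero_left]
  have hW : A z.fst ∈ Wᗮ := fun w hw => by
    rw [← A.adjoint_inner_left, hS.map_eq_zero w hw, inner_zero_left]
  exact mem_l2Prod_orthogonal.mpr
    ⟨add_mem (hT.apply_mem_orthogonal _) hV, sub_mem (hS.apply_mem_orthogonal _) hW⟩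

theorem saddleOperator_add_eq {Lx Ly : ℝ} (hT : IsRegularModulo T A V)
    (hS : IsRegularModulo S (A†) W) (hT_coco : Cocoercive Lx T) (hS_coco : Cocoercive Ly S)
    (z : WithLp 2 (E × F)) {v : WithLp 2 (E × F)} (hv : v ∈ l2Prod V W) :
    saddleOperator T S A (z + v) = saddleOperator T S A z := by
  obtain ⟨hvV, hvW⟩ : v.fst ∈ V ∧ v.snd ∈ W := hv
  have hTv := hT_coco.apply_add_eq hT.apply_mem_orthogonal z.fst hvV
  have hSv := hS_coco.apply_add_eq hS.apply_mem_orthogonal z.snd hvW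
  simp [saddleOperator, hT.map_eq_zero _ hvV, hS.map_eq_zero _ hvW, hTv, hSv]

theorem norm_map_fst_sub_sq_le {Ly : ℝ} (hS : Cocoercive Ly S) (T : E → E) (A : E →L[ℝ] F)
    (z w : WithLp 2 (E × F)) :
    ‖A (z.fst - w.fst)‖ ^ 2 ≤ 2 * (Ly * ⟪S z.snd - S w.snd, z.snd - w.snd⟫ +
      ‖(saddleOperator T S A z - saddleOperator T S A w).snd‖ ^ 2) := by
  have h_eq : A (z.fst - w.fst) = (S z.snd - S w.snd) -
      (saddleOperator T S A z - saddleOperator T S A w).snd := by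
    simp only [saddleOperator, WithLp.sub_snd, map_sub, WithLp.toLp_snd]
    abel
  rw [h_eq]
  exact (norm_sub_sq_le_two_mul _ _).trans (by gcongr; exact hS _ _)

theorem norm_adjoint_snd_sub_sq_le {Lx : ℝ} (hT : Cocoercive Lx T) (S : F → F) (A : E →L[ℝ] F)
    (z w : WithLp 2 (E × F)) :
    ‖(A†) (z.snd - w.snd)‖ ^ 2 ≤ 2 * (Lx * ⟪T z.fst - T w.fst, z.fst - w.fst⟫ +
      ‖(saddleOperator T S A z - saddleOperator T S A w).fst‖ ^ 2) := by
  have h_eq : (A†) (z.snd - w.snd) = (saddleOperator T S A z - saddleOperator T S A w).fst -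
      (T z.fst - T w.fst) := by
    simp only [saddleOperator, WithLp.sub_fst, map_sub, WithLp.toLp_fst]
    abel
  rw [h_eq]
  exact (norm_sub_sq_le_two_mul _ _).trans (by rw [add_comm]; gcongr; exact hT _ _)

theorem exists_norm_sub_le_saddleOperator {Lx Ly : ℝ} (hT : IsRegularModulo T A V)
    (hS : IsRegularModulo S (A†) W) (hT_coco : Cocoercive Lx T)
    (hS_coco : Cocoercive Ly S) (hLx : 0 ≤ Lx) (hLy : 0 ≤ Ly) :
    ∃ C : NNReal, ∀ z w, z - w ∈ (l2Prod V W)ᗮ →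
      ‖z - w‖ ≤ C * ‖saddleOperator T S A z - saddleOperator T S A w‖ := by
  obtain ⟨c, hc, hx⟩ := hT.exists_norm_sub_sq_le
  obtain ⟨d, hd, hy⟩ := hS.exists_norm_sub_sq_le
  set M := 2 + 2 * Lx + 2 * Ly
  refine ⟨⟨(c + d) * M + 1, by positivity⟩, fun z w hzw => ?_⟩
  obtain ⟨h_fst, h_snd⟩ := mem_l2Prod_orthogonal.mp hzw
  set r := saddleOperator T S A z - saddleOperator T S A w
  set σ := ⟪T z.fst - T w.fst, z.fst - w.fst⟫
  set τ := ⟪S z.snd - S w.snd, z.snd - w.snd⟫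
  have hσ : 0 ≤ σ := (hT_coco.stronglyMonotone_zero hLx).inner_nonneg le_rfl _ _
  have hτ : 0 ≤ τ := (hS_coco.stronglyMonotone_zero hLy).inner_nonneg le_rfl _ _
  have hr_norm : ‖r‖ ^ 2 = ‖r.fst‖ ^ 2 + ‖r.snd‖ ^ 2 := WithLp.prod_norm_sq_eq_of_L2 r
  have h_energy : σ + τ ≤ ‖z - w‖ * ‖r‖ := by
    rw [← inner_saddleOperator_sub T S A z w, mul_comm]
    exact real_inner_le_norm _ _
  have hx_bound : σ + ‖A (z.fst - w.fst)‖ ^ 2 ≤ M * (σ + τ + ‖r‖ ^ 2) := by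
    have := norm_map_fst_sub_sq_le hS_coco T A z w
    nlinarith [sq_nonneg ‖r.fst‖, sq_nonneg ‖r.snd‖]
  have hy_bound : τ + ‖(A†) (z.snd - w.snd)‖ ^ 2 ≤ M * (σ + τ + ‖r‖ ^ 2) := by
    have := norm_adjoint_snd_sub_sq_le hT_coco S A z w
    nlinarith [sq_nonneg ‖r.fst‖, sq_nonneg ‖r.snd‖]
  refine le_mul_of_sq_le (by positivity) (norm_nonneg r) ?_
  calc ‖z - w‖ ^ 2 = ‖z.fst - w.fst‖ ^ 2 + ‖z.snd - w.snd‖ ^ 2 :=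
        WithLp.prod_norm_sq_eq_of_L2 (z - w)
    _ ≤ c * (σ + ‖A (z.fst - w.fst)‖ ^ 2) + d * (τ + ‖(A†) (z.snd - w.snd)‖ ^ 2) :=
        add_le_add (hx _ _ h_fst) (hy _ _ h_snd)
    _ ≤ c * (M * (σ + τ + ‖r‖ ^ 2)) + d * (M * (σ + τ + ‖r‖ ^ 2)) := by gcongr
    _ = (c + d) * M * (σ + τ + ‖r‖ ^ 2) := by ring
    _ ≤ (c + d) * M * (‖z - w‖ * ‖r‖ + ‖r‖ ^ 2) := by gcongr

theorem saddleZeros_nonempty_and_eq_coset {Lx Ly : ℝ} (hT : IsRegularModulo T A V)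
    (hS : IsRegularModulo S (A†) W) (hT_coco : Cocoercive Lx T)
    (hS_coco : Cocoercive Ly S) (hLx : 0 ≤ Lx) (hLy : 0 ≤ Ly) :
    (saddleZeros T S A).Nonempty ∧ ∀ p ∈ saddleZeros T S A,
      saddleZeros T S A = ((p.1 + ·) '' (V : Set E)) ×ˢ ((p.2 + ·) '' (W : Set F)) := by
  have := (isClosed_l2Prod hT.isClosed hS.isClosed).completeSpace_coe
  obtain ⟨C, hC⟩ := exists_norm_sub_le_saddleOperator hT hS hT_coco hS_coco hLx hLy
  constructor
  · obtain ⟨K, hK⟩ := exists_lipschitzWith_saddleOperator (hT_coco.lipschitzWith hLx)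
      (hS_coco.lipschitzWith hLy) A
    have h_mono := stronglyMonotone_saddleOperator (hT_coco.stronglyMonotone_zero hLx)
      (hS_coco.stronglyMonotone_zero hLy) A
    obtain ⟨z, hz⟩ :=
      h_mono.exists_eq_zero_of_orthogonal hK (saddleOperator_mem_orthogonal hT hS) hC
    exact ⟨z.ofLp, mem_saddleZeros_iff.mpr hz⟩
  · intro p hp
    have h_iff (q : E × F) : q ∈ saddleZeros T S A ↔ q.1 - p.1 ∈ V ∧ q.2 - p.2 ∈ W :=
      mem_saddleZeros_iff.trans <| apply_eq_zero_iff_sub_mem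
        (fun z _ => saddleOperator_add_eq hT hS hT_coco hS_coco z) hC (mem_saddleZeros_iff.mp hp)
    ext q
    simp [h_iff, Set.image_add_left, neg_add_eq_sub]

theorem solution_set_structure_general {μx Lx μy Ly μxy μyx : ℝ}
    (hμx : 0 ≤ μx) (hLx : 0 < Lx) (hμy : 0 ≤ μy) (hLy : 0 < Ly) (hμxy : 0 ≤ μxy) (hμyx : 0 ≤ μyx)
    (hT : StronglyMonotone μx T) (hT_coco : Cocoercive Lx T)
    (hS : StronglyMonotone μy S) (hS_coco : Cocoercive Ly S)
    (hA : ((∀ x, T x ∈ (A†).range) ∧ ∀ x ∈ A.kerᗮ, μxy * ‖x‖ ≤ ‖A x‖) ∨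
      ∀ x, μxy * ‖x‖ ≤ ‖A x‖)
    (hA' : ((∀ y, S y ∈ A.range) ∧ ∀ y ∈ (A†).kerᗮ, μyx * ‖y‖ ≤ ‖(A†) y‖) ∨
      ∀ y, μyx * ‖y‖ ≤ ‖(A†) y‖)
    (hδx : 0 < μx + μxy ^ 2 / Ly) (hδy : 0 < μy + μyx ^ 2 / Lx)
    {Vx : Set E} (hVx_pos : 0 < μx → Vx = {0}) (hVx_zero : μx = 0 → Vx = A.ker)
    {Vy : Set F} (hVy_pos : 0 < μy → Vy = {0}) (hVy_zero : μy = 0 → Vy = (A†).ker) :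
    (saddleZeros T S A).Nonempty ∧ ∀ p ∈ saddleZeros T S A,
      saddleZeros T S A = ((p.1 + ·) '' Vx) ×ˢ ((p.2 + ·) '' Vy) := by
  obtain ⟨V, rfl, hV⟩ := hT.exists_isRegularModulo hμx hμxy hδx hA hVx_pos hVx_zero
  obtain ⟨W, rfl, hW⟩ := hS.exists_isRegularModulo (A := A†) hμy hμyx hδy
    (by rwa [A.adjoint_adjoint]) hVy_pos hVy_zero
  exact saddleZeros_nonempty_and_eq_coset hV hW hT_coco hS_coco hLx.le hLy.le

end Saddle

theorem toEuclideanLin_transpose_eq_adjoint {m n : Type*} [Fintype m] [Fintype n]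
    [DecidableEq m] [DecidableEq n] (B : Matrix m n ℝ) :
    Matrix.toEuclideanLin Bᵀ =
      ContinuousLinearMap.adjoint (Matrix.toEuclideanLin B).toContinuousLinearMap := by
  rw [← Matrix.conjTranspose_eq_transpose_of_trivial,
    Matrix.toEuclideanLin_conjTranspose_eq_adjoint]
  rfl

/-- Structure of the solution set of the bilinearly-coupled saddle-point problem
`min_x max_y f(x) + ⟨y, Bx⟩ - g(y)` under smoothness/strong convexity and the
spectral assumption on `B`, assuming `δx, δy > 0`. -/
theorem solution_set_structure (dx dy : ℕ)
    (f : EuclideanSpace ℝ (Fin dx) → ℝ)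
    (f' : EuclideanSpace ℝ (Fin dx) → EuclideanSpace ℝ (Fin dx))
    (g : EuclideanSpace ℝ (Fin dy) → ℝ)
    (g' : EuclideanSpace ℝ (Fin dy) → EuclideanSpace ℝ (Fin dy))
    (B : Matrix (Fin dy) (Fin dx) ℝ)
    (μx Lx μy Ly μxy μyx Lxy : ℝ)
    (hμx : 0 ≤ μx) (hLx : μx < Lx)
    (hμy : 0 ≤ μy) (hLy : μy < Ly)
    (hμxy : 0 ≤ μxy) (hμyx : 0 ≤ μyx) (hLxy : μxy < Lxy) (hLxy' : μyx < Lxy)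
    -- f is differentiable with gradient f', μx-strongly convex and Lx-smooth
    (hfd : ∀ x, HasGradientAt f (f' x) x)
    (hfsc : ∀ x x', μx / 2 * ‖x - x'‖ ^ 2 ≤ f x - f x' - ⟪f' x', x - x'⟫)
    (hfsm : ∀ x x', |f x - f x' - ⟪f' x', x - x'⟫| ≤ Lx / 2 * ‖x - x'‖ ^ 2)
    -- g is differentiable with gradient g', μy-strongly convex and Ly-smooth
    (hgd : ∀ y, HasGradientAt g (g' y) y)
    (hgsc : ∀ y y', μy / 2 * ‖y - y'‖ ^ 2 ≤ g y - g y' - ⟪g' y', y - y'⟫)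
    (hgsm : ∀ y y', |g y - g y' - ⟪g' y', y - y'⟫| ≤ Ly / 2 * ‖y - y'‖ ^ 2)
    -- spectral assumption on B
    (hBub : ∀ x, ‖Matrix.toEuclideanLin B x‖ ≤ Lxy * ‖x‖)
    (hBlbx : ((∀ x, f' x ∈ LinearMap.range (Matrix.toEuclideanLin Bᵀ)) ∧
        ∀ x ∈ (LinearMap.ker (Matrix.toEuclideanLin B))ᗮ,
          μxy * ‖x‖ ≤ ‖Matrix.toEuclideanLin B x‖) ∨
      ((¬ ∀ x, f' x ∈ LinearMap.range (Matrix.toEuclideanLin Bᵀ)) ∧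
        ∀ x, μxy * ‖x‖ ≤ ‖Matrix.toEuclideanLin B x‖))
    (hBlby : ((∀ y, g' y ∈ LinearMap.range (Matrix.toEuclideanLin B)) ∧
        ∀ y ∈ (LinearMap.ker (Matrix.toEuclideanLin Bᵀ))ᗮ,
          μyx * ‖y‖ ≤ ‖Matrix.toEuclideanLin Bᵀ y‖) ∨
      ((¬ ∀ y, g' y ∈ LinearMap.range (Matrix.toEuclideanLin B)) ∧
        ∀ y, μyx * ‖y‖ ≤ ‖Matrix.toEuclideanLin Bᵀ y‖))
    (hcons : 0 < μxy → 0 < μyx → μxy = μyx)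
    -- δx > 0 and δy > 0
    (hδx : 0 < μx + μxy ^ 2 / Ly) (hδy : 0 < μy + μyx ^ 2 / Lx)
    -- the translation subspaces
    (Vx : Set (EuclideanSpace ℝ (Fin dx)))
    (hVxpos : 0 < μx → Vx = {0})
    (hVxzero : μx = 0 → Vx = (LinearMap.ker (Matrix.toEuclideanLin B) : Set _))
    (Vy : Set (EuclideanSpace ℝ (Fin dy)))
    (hVypos : 0 < μy → Vy = {0})
    (hVyzero : μy = 0 → Vy = (LinearMap.ker (Matrix.toEuclideanLin Bᵀ) : Set _)) :
    {p : EuclideanSpace ℝ (Fin dx) × EuclideanSpace ℝ (Fin dy) |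
        f' p.1 + Matrix.toEuclideanLin Bᵀ p.2 = 0 ∧
        g' p.2 - Matrix.toEuclideanLin B p.1 = 0}.Nonempty ∧
    ∀ p ∈ {p : EuclideanSpace ℝ (Fin dx) × EuclideanSpace ℝ (Fin dy) |
        f' p.1 + Matrix.toEuclideanLin Bᵀ p.2 = 0 ∧
        g' p.2 - Matrix.toEuclideanLin B p.1 = 0},
      {q : EuclideanSpace ℝ (Fin dx) × EuclideanSpace ℝ (Fin dy) |
        f' q.1 + Matrix.toEuclideanLin Bᵀ q.2 = 0 ∧
        g' q.2 - Matrix.toEuclideanLin B q.1 = 0} =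
      ((p.1 + ·) '' Vx) ×ˢ ((p.2 + ·) '' Vy) := by
  rw [toEuclideanLin_transpose_eq_adjoint] at *
  obtain ⟨hf_mono, hf_coco⟩ := stronglyMonotone_and_cocoercive_of_bregmanDiv hμx hLx hfsc hfsm
  obtain ⟨hg_mono, hg_coco⟩ := stronglyMonotone_and_cocoercive_of_bregmanDiv hμy hLy hgsc hgsm
  exact solution_set_structure_general (A := (Matrix.toEuclideanLin B).toContinuousLinearMap)
    hμx (hμx.trans_lt hLx) hμy (hμy.trans_lt hLy) hμxy hμyx hf_mono hf_coco hg_mono hg_coco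
    (hBlbx.imp_right And.right) (hBlby.imp_right And.right) hδx hδy hVxpos hVxzero hVypos hVyzero
end

section
/- Let n ≥ 2 be an integer and α, β, γ > 0. Define the matrix E ∈ ℝ^{3n×3n} (1-indexed) by: E(1,j) = γ for 1 ≤ j ≤ n; E(1+i, i) = β and E(1+i, n+1) = −β for 1 ≤ i ≤ n; E(n+1+i, n+i) = α and E(n+1+i, n+i+1) = −α for 1 ≤ i ≤ n−1; E(2n+i, 2n) = −β and E(2n+i, 2n+i) = β for 1 ≤ i ≤ n; and all other entries equal to 0. Then min{nγ²/4, β²/36, α²/(9n²)}·I_{3n} ⪯ E·Eᵀ ⪯ max{2nγ², 2(n+1)β², 4α²}·I_{3n}. Moreover, the matrix E' ∈ ℝ^{(3n−1)×3n} obtained from E by deleting its first row satisfies min{β²/36, α²/(9n²)}·I_{3n−1} ⪯ E'·E'ᵀ ⪯ max{2(n+1)β², 4α²}·I_{3n−1}. -/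
open scoped RealInnerProductSpace Matrix

/-!
Deleting the first row of `E` leaves the transposed weighted incidence matrix of a double broom: `n`
left leaves attached to the first vertex of a path on `n` vertices, and `n` right leaves attached to
its last vertex. Hence `Eᵀ x` is the divergence of a flow along the edges, plus a source `γ x₀` at
each left leaf. The flow into a path vertex is minus the total divergence from that vertex on, so
Cauchy-Schwarz over these at most `2 n` vertices controls every path edge. The total divergence
equals the total source, which controls `x₀`. The variance of the divergence over the left leaves
does not see the source, which controls the left edges. This bounds `E Eᵀ` from below by a diagonal
matrix, constant on each kind of row; expanding the squares bounds it from above by another one, and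
both comparisons restrict to the principal submatrix left after deleting the first row and column.
-/

section PosSemidef

open Matrix

variable {m k R : Type*}

lemma dotProduct_mul_transpose_mulVec [Fintype m] [Fintype k] [CommSemiring R]
    (A : Matrix m k R) (x : m → R) : x ⬝ᵥ ((A * Aᵀ) *ᵥ x) = ∑ j, (x ᵥ* A) j ^ 2 := by
  rw [← mulVec_mulVec, dotProduct_mulVec, mulVec_transpose]
  simp only [dotProduct, sq]

lemma dotProduct_diagonal_mulVec [Fintype m] [DecidableEq m] [CommSemiring R] (d x : m → R) :
    x ⬝ᵥ (diagonal d *ᵥ x) = ∑ i, d i * x i ^ 2 := by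
  simp only [dotProduct, mulVec_diagonal, sq, mul_left_comm]

lemma isHermitian_mul_transpose_self [Fintype k] [CommSemiring R] [StarRing R] [TrivialStar R]
    (A : Matrix m k R) : (A * Aᵀ).IsHermitian := by
  rw [← conjTranspose_eq_transpose_of_trivial]
  exact isHermitian_mul_conjTranspose_self A

section Diagonal

variable [DecidableEq m] [PartialOrder R]

lemma posSemidef_mul_transpose_sub_diagonal_iff [Fintype m] [Fintype k] [CommRing R]
    [IsOrderedRing R] [StarRing R] [TrivialStar R] {A : Matrix m k R} {d : m → R} :
    (A * Aᵀ - diagonal d).PosSemidef ↔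
      ∀ x : m → R, ∑ i, d i * x i ^ 2 ≤ ∑ j, (x ᵥ* A) j ^ 2 := by
  have hsymm : (A * Aᵀ - diagonal d).IsHermitian :=
    (isHermitian_mul_transpose_self A).sub (isHermitian_diagonal d)
  simp only [posSemidef_iff_dotProduct_mulVec, hsymm, true_and, star_trivial, sub_mulVec,
    dotProduct_sub, dotProduct_mul_transpose_mulVec, dotProduct_diagonal_mulVec, sub_nonneg]

lemma posSemidef_diagonal_sub_mul_transpose_iff [Fintype m] [Fintype k] [CommRing R]
    [IsOrderedRing R] [StarRing R] [TrivialStar R] {A : Matrix m k R} {d : m → R} :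
    (diagonal d - A * Aᵀ).PosSemidef ↔
      ∀ x : m → R, ∑ j, (x ᵥ* A) j ^ 2 ≤ ∑ i, d i * x i ^ 2 := by
  have hsymm : (diagonal d - A * Aᵀ).IsHermitian :=
    (isHermitian_diagonal d).sub (isHermitian_mul_transpose_self A)
  simp only [posSemidef_iff_dotProduct_mulVec, hsymm, true_and, star_trivial, sub_mulVec,
    dotProduct_sub, dotProduct_mul_transpose_mulVec, dotProduct_diagonal_mulVec, sub_nonneg]

variable [Ring R] [StarRing R] [StarOrderedRing R] {M : Matrix m m R} {d : m → R} {c : R}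

lemma posSemidef_sub_smul_one_of_forall_le (hM : (M - diagonal d).PosSemidef)
    (hc : ∀ i, c ≤ d i) : (M - c • (1 : Matrix m m R)).PosSemidef := by
  have hd : (diagonal fun i ↦ d i - c).PosSemidef :=
    posSemidef_diagonal_iff.2 fun i ↦ sub_nonneg.2 (hc i)
  rw [smul_one_eq_diagonal]
  simpa only [← diagonal_sub, sub_add_sub_cancel] using hM.add hd

lemma posSemidef_smul_one_sub_of_forall_le (hM : (diagonal d - M).PosSemidef)
    (hc : ∀ i, d i ≤ c) : (c • (1 : Matrix m m R) - M).PosSemidef := by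
  have hd : (diagonal fun i ↦ c - d i).PosSemidef :=
    posSemidef_diagonal_iff.2 fun i ↦ sub_nonneg.2 (hc i)
  rw [smul_one_eq_diagonal]
  simpa only [← diagonal_sub, sub_add_sub_cancel] using hd.add hM

end Diagonal

end PosSemidef

section Sequences

open Finset

lemma add_sq_le_add_mul_add {R : Type*} [CommRing R] [LinearOrder R] [IsStrictOrderedRing R]
    {a b p q s t : R} (hp : 0 ≤ p) (hq : 0 ≤ q) (hs : 0 ≤ s) (ht : 0 ≤ t)
    (ha : a ^ 2 ≤ p * s) (hb : b ^ 2 ≤ q * t) : (a + b) ^ 2 ≤ (p + q) * (s + t) := by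
  simpa [Fin.sum_univ_two] using
    sum_sq_le_sum_mul_sum_of_sq_le_mul univ (r := ![a, b]) (f := ![p, q]) (g := ![s, t])
      (by simp [Fin.forall_fin_two, hp, hq]) (by simp [Fin.forall_fin_two, hs, ht])
      (by simp [Fin.forall_fin_two, ha, hb])

lemma sum_range_three_mul {M : Type*} [AddCommMonoid M] (n : ℕ) (f : ℕ → M) :
    ∑ i ∈ range (3 * n), f i =
      ∑ j ∈ range n, f j + ∑ j ∈ range n, f (n + j) + ∑ j ∈ range n, f (2 * n + j) := by
  rw [show 3 * n = 2 * n + n by ring, sum_range_add, two_mul, sum_range_add]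

lemma sum_range_three_mul_of_pos {M : Type*} [AddCommMonoid M] {n : ℕ} (hn : 0 < n) (f : ℕ → M) :
    ∑ i ∈ range (3 * n), f i =
      f 0 + ∑ j ∈ range n, f (j + 1) + ∑ c ∈ Ico 1 n, f (n + c) + ∑ j ∈ range n, f (2 * n + j) := by
  rw [sum_range_three_mul, sum_range_eq_add_Ico (fun c ↦ f (n + c)) hn, add_zero, ← add_assoc,
    ← sum_range_succ, sum_range_succ', add_comm _ (f 0)]

variable {n : ℕ} (φ : ℕ → ℝ)

lemma sq_sum_range_le (n : ℕ) : (∑ j ∈ range n, φ j) ^ 2 ≤ n * ∑ j ∈ range n, φ j ^ 2 := by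
  simpa using sq_sum_le_card_mul_sum_sq (s := range n) (f := φ)

lemma sq_sub_le_mul_sum_sq_sub {i : ℕ} (hi : i ≤ n) :
    (φ n - φ i) ^ 2 ≤ (n - i) * ∑ j ∈ range n, (φ (j + 1) - φ j) ^ 2 := by
  calc (φ n - φ i) ^ 2 = (∑ j ∈ Ico i n, (φ (j + 1) - φ j)) ^ 2 := by rw [sum_Ico_sub _ hi]
    _ ≤ (n - i) * ∑ j ∈ Ico i n, (φ (j + 1) - φ j) ^ 2 := by
      simpa [Nat.cast_sub hi] using
        sq_sum_le_card_mul_sum_sq (s := Ico i n) (f := fun j ↦ φ (j + 1) - φ j)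
    _ ≤ (n - i) * ∑ j ∈ range n, (φ (j + 1) - φ j) ^ 2 := by
      have : (0 : ℝ) ≤ n - i := sub_nonneg.2 (Nat.cast_le.2 hi)
      gcongr
      exact fun j hj ↦ mem_range.2 (mem_Ico.1 hj).2

lemma sum_sq_sub_le : ∑ j ∈ range n, (φ (j + 1) - φ j) ^ 2 ≤
    2 * φ 0 ^ 2 + 4 * ∑ c ∈ Ico 1 n, φ c ^ 2 + 2 * φ n ^ 2 := by
  rcases n.eq_zero_or_pos with rfl | hn
  · simp only [range_zero, sum_empty]
    positivity
  have hstep : ∑ j ∈ range n, (φ (j + 1) - φ j) ^ 2 ≤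
      2 * (∑ j ∈ range n, φ (j + 1) ^ 2 + ∑ j ∈ range n, φ j ^ 2) := by
    rw [← sum_add_distrib, mul_sum]
    gcongr with j
    linarith [sq_nonneg (φ (j + 1) + φ j)]
  have hshift := (sum_range_succ' (φ · ^ 2) n).symm.trans (sum_range_succ (φ · ^ 2) n)
  have hsplit := sum_range_eq_add_Ico (φ · ^ 2) hn
  linarith

lemma sum_Ico_one_two_mul_sub (hn : 0 < n) :
    ∑ c ∈ Ico 1 n, (2 * n - c : ℝ) = 3 / 2 * n * (n - 1) := by
  have hgauss : (∑ c ∈ Ico 1 n, (c : ℝ)) * 2 = n * (n - 1) := by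
    have := sum_range_id_mul_two n
    rw [sum_range_eq_add_Ico _ hn, zero_add] at this
    rw [← Nat.cast_pred hn, ← Nat.cast_mul, ← this]
    simp
  rw [sum_sub_distrib, sum_const, Nat.card_Ico, nsmul_eq_mul, Nat.cast_pred hn]
  linarith

end Sequences

/-- The squared divergence of a flow on the double broom, as a function of the source `a` at each
left leaf, the flows `u` and `w` on the left and right leaf edges, and the flow `φ` along the path,
where `φ 0` and `φ n` are the flows exchanged with the left and the right leaves. -/
def divergenceEnergy (n : ℕ) (a : ℝ) (u φ w : ℕ → ℝ) : ℝ :=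
  ∑ j ∈ Finset.range n, (a + u j) ^ 2 + ∑ j ∈ Finset.range n, (φ (j + 1) - φ j) ^ 2 +
    ∑ j ∈ Finset.range n, w j ^ 2

namespace divergenceEnergy

open Finset

variable {n : ℕ} {u φ w : ℕ → ℝ}

lemma sq_pathFlow_le (hw : φ n = -∑ j ∈ range n, w j) {i : ℕ} (hi : i ≤ n) :
    φ i ^ 2 ≤
      (2 * n - i) * (∑ j ∈ range n, (φ (j + 1) - φ j) ^ 2 + ∑ j ∈ range n, w j ^ 2) := by
  have hi' : (0 : ℝ) ≤ n - i := sub_nonneg.2 (Nat.cast_le.2 hi)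
  have hend : (-φ n) ^ 2 ≤ n * ∑ j ∈ range n, w j ^ 2 := by
    rw [hw, neg_neg]
    exact sq_sum_range_le w n
  calc φ i ^ 2 = (φ n - φ i + -φ n) ^ 2 := by ring
    _ ≤ (n - i + n) * (∑ j ∈ range n, (φ (j + 1) - φ j) ^ 2 + ∑ j ∈ range n, w j ^ 2) :=
      add_sq_le_add_mul_add hi' n.cast_nonneg (sum_nonneg fun _ _ ↦ sq_nonneg _)
        (sum_nonneg fun _ _ ↦ sq_nonneg _) (sq_sub_le_mul_sum_sq_sub φ hi) hend
    _ = _ := by ring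

lemma sum_sq_pathFlow_le (hw : φ n = -∑ j ∈ range n, w j) (a : ℝ) (u : ℕ → ℝ) :
    ∑ c ∈ Ico 1 n, φ c ^ 2 ≤ 3 / 2 * n ^ 2 * divergenceEnergy n a u φ w := by
  rcases n.eq_zero_or_pos with rfl | hn
  · simp
  set F := ∑ j ∈ range n, (φ (j + 1) - φ j) ^ 2 + ∑ j ∈ range n, w j ^ 2 with hF
  have : 0 ≤ F := by rw [hF]; positivity
  have hFE : F ≤ divergenceEnergy n a u φ w := by
    rw [hF, divergenceEnergy, add_assoc]
    exact le_add_of_nonneg_left (by positivity)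
  calc ∑ c ∈ Ico 1 n, φ c ^ 2 ≤ ∑ c ∈ Ico 1 n, (2 * n - c) * F :=
        sum_le_sum fun c hc ↦ sq_pathFlow_le hw (mem_Ico.1 hc).2.le
    _ = 3 / 2 * (n * (n - 1)) * F := by rw [← sum_mul, sum_Ico_one_two_mul_sub hn]; ring
    _ ≤ 3 / 2 * n ^ 2 * divergenceEnergy n a u φ w := by
      rw [sq (n : ℝ)]
      gcongr
      exact sub_le_self _ zero_le_one

lemma mul_sq_source_le (hu : φ 0 = ∑ j ∈ range n, u j) (hw : φ n = -∑ j ∈ range n, w j) (a : ℝ) :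
    n * a ^ 2 ≤ 3 * divergenceEnergy n a u φ w := by
  rcases n.eq_zero_or_pos with rfl | hn
  · simp [divergenceEnergy]
  have hn' : (0 : ℝ) < n := Nat.cast_pos.2 hn
  have htotal : n * a = ∑ j ∈ range n, (a + u j) + -φ 0 := by
    simp [sum_add_distrib, hu]
  have hright : (-φ 0) ^ 2 ≤ 2 * n *
      (∑ j ∈ range n, (φ (j + 1) - φ j) ^ 2 + ∑ j ∈ range n, w j ^ 2) := by
    simpa using sq_pathFlow_le hw n.zero_le
  have hcs : (n * a) ^ 2 ≤ (n + 2 * n) * divergenceEnergy n a u φ w := by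
    rw [htotal, divergenceEnergy, add_assoc (∑ j ∈ range n, (a + u j) ^ 2)]
    exact add_sq_le_add_mul_add hn'.le (by positivity) (by positivity) (by positivity)
      (sq_sum_range_le _ n) hright
  exact le_of_mul_le_mul_left (by linarith) hn'

lemma sum_sq_left_le (hu : φ 0 = ∑ j ∈ range n, u j) (hw : φ n = -∑ j ∈ range n, w j) (a : ℝ) :
    ∑ j ∈ range n, u j ^ 2 ≤ 2 * divergenceEnergy n a u φ w := by
  rcases n.eq_zero_or_pos with rfl | hn
  · simp [divergenceEnergy]
  have hn' : (0 : ℝ) < n := Nat.cast_pos.2 hn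
  -- `n ∑ u² - (∑ u)²` is `n²` times the variance of `u`, hence unchanged by the shift by `a`.
  have hvariance : n * ∑ j ∈ range n, u j ^ 2 - (∑ j ∈ range n, u j) ^ 2 =
      n * ∑ j ∈ range n, (a + u j) ^ 2 - (∑ j ∈ range n, (a + u j)) ^ 2 := by
    simp only [add_sq, sum_add_distrib, ← mul_sum, sum_const, card_range, nsmul_eq_mul]
    ring
  have hright := sq_pathFlow_le hw n.zero_le
  have hscaled : n * ∑ j ∈ range n, u j ^ 2 ≤ n * (2 * divergenceEnergy n a u φ w) := by
    have hV : 0 ≤ n * ∑ j ∈ range n, (a + u j) ^ 2 := by positivity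
    rw [hu, Nat.cast_zero] at hright
    rw [divergenceEnergy]
    linarith [sq_nonneg (∑ j ∈ range n, (a + u j))]
  exact le_of_mul_le_mul_left hscaled hn'

lemma sum_sq_right_le (n : ℕ) (a : ℝ) (u φ w : ℕ → ℝ) :
    ∑ j ∈ range n, w j ^ 2 ≤ divergenceEnergy n a u φ w :=
  le_add_of_nonneg_left (by positivity)

theorem lower_bound (hu : φ 0 = ∑ j ∈ range n, u j) (hw : φ n = -∑ j ∈ range n, w j) (a : ℝ) :
    n / 4 * a ^ 2 + 1 / 36 * ∑ j ∈ range n, u j ^ 2 + 1 / (9 * n ^ 2) * ∑ c ∈ Ico 1 n, φ c ^ 2 +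
      1 / 36 * ∑ j ∈ range n, w j ^ 2 ≤ divergenceEnergy n a u φ w := by
  have hpath : 1 / (9 * n ^ 2) * ∑ c ∈ Ico 1 n, φ c ^ 2 ≤
      1 / 6 * divergenceEnergy n a u φ w := by
    rcases n.eq_zero_or_pos with rfl | hn
    · simp [divergenceEnergy]
    have : (0 : ℝ) < n := Nat.cast_pos.2 hn
    rw [one_div_mul_eq_div, div_le_iff₀ (by positivity)]
    linarith [sum_sq_pathFlow_le hw a u]
  linarith [mul_sq_source_le hu hw a, sum_sq_left_le hu hw a, sum_sq_right_le n a u φ w]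

theorem upper_bound (hu : φ 0 = ∑ j ∈ range n, u j) (hw : φ n = -∑ j ∈ range n, w j) (a : ℝ) :
    divergenceEnergy n a u φ w ≤ 2 * n * a ^ 2 + 2 * (n + 1) * ∑ j ∈ range n, u j ^ 2 +
      4 * ∑ c ∈ Ico 1 n, φ c ^ 2 + 2 * (n + 1) * ∑ j ∈ range n, w j ^ 2 := by
  have hleft : ∑ j ∈ range n, (a + u j) ^ 2 ≤ 2 * n * a ^ 2 + 2 * ∑ j ∈ range n, u j ^ 2 := by
    calc ∑ j ∈ range n, (a + u j) ^ 2 ≤ ∑ j ∈ range n, 2 * (a ^ 2 + u j ^ 2) :=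
          sum_le_sum fun j _ ↦ add_sq_le
      _ = _ := by rw [← mul_sum, sum_add_distrib, sum_const, card_range, nsmul_eq_mul]; ring
  have hpath := sum_sq_sub_le (n := n) φ
  have hsource : φ 0 ^ 2 ≤ n * ∑ j ∈ range n, u j ^ 2 := hu ▸ sq_sum_range_le u n
  have hsink : φ n ^ 2 ≤ n * ∑ j ∈ range n, w j ^ 2 := by
    rw [hw, neg_sq]
    exact sq_sum_range_le w n
  have hW : 0 ≤ ∑ j ∈ range n, w j ^ 2 := by positivity
  rw [divergenceEnergy]
  linarith

end divergenceEnergy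

/-- The entries of `E`, with rows and columns numbered from `0` by natural numbers. Rows `1`, …,
`3 n - 1` are the edges of the double broom, with vertices the columns: left leaves `j < n`, path
vertices `n ≤ j < 2 n`, right leaves `2 n ≤ j`. -/
def doubleBroomEntry (n : ℕ) (α β γ : ℝ) (i j : ℕ) : ℝ :=
  if i = 0 then (if j < n then γ else 0)
  else if i ≤ n then (if j + 1 = i then β else if j = n then -β else 0)
  else if i ≤ 2 * n - 1 then (if j + 1 = i then α else if j = i then -α else 0)
  else (if j = 2 * n - 1 then -β else if j = i then β else 0)

/-- The matrix `E` of the theorem: the transposed incidence matrix of the double broom with weights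
`β` on the leaf edges and `α` on the path edges, below a row equal to `γ` on the left leaves. -/
def doubleBroomMatrix (n : ℕ) (α β γ : ℝ) : Matrix (Fin (3 * n)) (Fin (3 * n)) ℝ :=
  .of fun i j ↦ doubleBroomEntry n α β γ i j

/-- The `j`-th entry of `Eᵀ x`, for `x` indexed by natural numbers. -/
def divergence (n : ℕ) (α β γ : ℝ) (x : ℕ → ℝ) (j : ℕ) : ℝ :=
  ∑ i ∈ Finset.range (3 * n), doubleBroomEntry n α β γ i j * x i

/-- The flow along the path of the double broom when the edges carry the values `x`, indexed by the
rows of `E`: `pathFlow n α β x c` enters the `c`-th path vertex from its predecessor, the left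
leaves counting as the predecessor of vertex `0`, and `pathFlow n α β x n` leaves the last vertex
towards the right leaves. -/
def pathFlow (n : ℕ) (α β : ℝ) (x : ℕ → ℝ) (c : ℕ) : ℝ :=
  if c = 0 then ∑ j ∈ Finset.range n, β * x (j + 1)
  else if c < n then α * x (n + c)
  else -∑ j ∈ Finset.range n, β * x (2 * n + j)

/-- Row-indexed diagonal weights, constant on each of the three kinds of rows of `E`: `a` on the
source row `0`, `b` on the rows of the leaf edges and `c` on the rows of the path edges. -/
def rowWeight (n : ℕ) (a b c : ℝ) (i : ℕ) : ℝ :=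
  if i = 0 then a else if i ≤ n then b else if i ≤ 2 * n - 1 then c else b

section RowWeight

open Finset

variable (n : ℕ) (a b c : ℝ) (i : ℕ)

lemma min_le_rowWeight_succ : min b c ≤ rowWeight n a b c (i + 1) := by
  unfold rowWeight
  split_ifs <;> simp_all

lemma rowWeight_succ_le_max : rowWeight n a b c (i + 1) ≤ max b c := by
  unfold rowWeight
  split_ifs <;> simp_all

lemma min_le_rowWeight : min a (min b c) ≤ rowWeight n a b c i := by
  cases i with
  | zero => exact min_le_left _ _
  | succ i => exact (min_le_right _ _).trans (min_le_rowWeight_succ n a b c i)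

lemma rowWeight_le_max : rowWeight n a b c i ≤ max a (max b c) := by
  cases i with
  | zero => exact le_max_left _ _
  | succ i => exact (rowWeight_succ_le_max n a b c i).trans (le_max_right _ _)

variable {n}

lemma sum_rowWeight_mul (hn : 0 < n) (f : ℕ → ℝ) :
    ∑ i : Fin (3 * n), rowWeight n a b c i * f i =
      a * f 0 + b * ∑ j ∈ range n, f (j + 1) + c * ∑ l ∈ Ico 1 n, f (n + l) +
        b * ∑ j ∈ range n, f (2 * n + j) := by
  have hleft : ∀ j ∈ range n, rowWeight n a b c (j + 1) * f (j + 1) = b * f (j + 1) := by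
    intro j hj
    have := mem_range.1 hj
    rw [rowWeight, if_neg (by lia), if_pos (by lia)]
  have hpath : ∀ l ∈ Ico 1 n, rowWeight n a b c (n + l) * f (n + l) = c * f (n + l) := by
    intro l hl
    have := mem_Ico.1 hl
    rw [rowWeight, if_neg (by lia), if_neg (by lia), if_pos (by lia)]
  have hright : ∀ j ∈ range n,
      rowWeight n a b c (2 * n + j) * f (2 * n + j) = b * f (2 * n + j) := by
    intro j _
    rw [rowWeight, if_neg (by lia), if_neg (by lia), if_neg (by lia)]
  rw [Fin.sum_univ_eq_sum_range fun i ↦ rowWeight n a b c i * f i, sum_range_three_mul_of_pos hn,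
    sum_congr rfl hleft, sum_congr rfl hpath, sum_congr rfl hright, ← mul_sum, ← mul_sum, ← mul_sum,
    rowWeight, if_pos rfl]

end RowWeight

section DoubleBroom

open Finset

variable {n : ℕ} (α β γ : ℝ) (x : ℕ → ℝ)

lemma pathFlow_zero : pathFlow n α β x 0 = ∑ j ∈ range n, β * x (j + 1) :=
  if_pos rfl

lemma pathFlow_self (hn : 0 < n) :
    pathFlow n α β x n = -∑ j ∈ range n, β * x (2 * n + j) := by
  rw [pathFlow, if_neg hn.ne', if_neg n.lt_irrefl]

lemma pathFlow_of_mem_Ico {c : ℕ} (hc : c ∈ Ico 1 n) :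
    pathFlow n α β x c = α * x (n + c) := by
  rw [mem_Ico] at hc
  rw [pathFlow, if_neg (by lia), if_pos hc.2]

lemma sum_entry_mul_leftEdges (j : ℕ) :
    ∑ l ∈ range n, doubleBroomEntry n α β γ (l + 1) j * x (l + 1) =
      if j < n then β * x (j + 1)
      else if j = n then -∑ l ∈ range n, β * x (l + 1) else 0 := by
  have hentry : ∀ l ∈ range n, doubleBroomEntry n α β γ (l + 1) j * x (l + 1) =
      if j = l then β * x (j + 1) else if j = n then -(β * x (l + 1)) else 0 := by
    grind [doubleBroomEntry]
  rw [sum_congr rfl hentry]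
  rcases lt_trichotomy j n with hj | rfl | hj
  · rw [sum_eq_single_of_mem j (mem_range.2 hj) (by grind), if_pos rfl, if_pos hj]
  · rw [if_neg j.lt_irrefl, if_pos rfl, ← sum_neg_distrib]
    exact sum_congr rfl (by grind)
  · rw [if_neg hj.not_gt, if_neg hj.ne']
    exact sum_eq_zero (by grind)

lemma sum_entry_mul_pathEdges (c : ℕ) :
    ∑ l ∈ Ico 1 n, doubleBroomEntry n α β γ (n + l) (n + c) * x (n + l) =
      (if c + 1 < n then α * x (n + (c + 1)) else 0) -
        if c ∈ Ico 1 n then α * x (n + c) else 0 := by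
  have hentry : ∀ l ∈ Ico 1 n, doubleBroomEntry n α β γ (n + l) (n + c) * x (n + l) =
      (if c + 1 = l then α * x (n + l) else 0) - if c = l then α * x (n + l) else 0 := by
    grind [doubleBroomEntry]
  simp [sum_congr rfl hentry]

lemma sum_entry_mul_rightEdges (hn : 0 < n) (j : ℕ) :
    ∑ l ∈ range n, doubleBroomEntry n α β γ (2 * n + l) j * x (2 * n + l) =
      if j + 1 = 2 * n then -∑ l ∈ range n, β * x (2 * n + l)
      else if 2 * n ≤ j ∧ j < 3 * n then β * x j else 0 := by
  have hentry : ∀ l ∈ range n, doubleBroomEntry n α β γ (2 * n + l) j * x (2 * n + l) =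
      if j + 1 = 2 * n then -(β * x (2 * n + l)) else if j = 2 * n + l then β * x j else 0 := by
    grind [doubleBroomEntry]
  rw [sum_congr rfl hentry]
  split_ifs with hj hj'
  · rw [← sum_neg_distrib]
  · rw [sum_eq_single_of_mem (j - 2 * n) (mem_range.2 (by lia)) (by grind), if_pos (by lia)]
  · exact sum_eq_zero (by grind)

lemma divergence_leftLeaf {j : ℕ} (hj : j < n) :
    divergence n α β γ x j = γ * x 0 + β * x (j + 1) := by
  have hpath : ∑ l ∈ Ico 1 n, doubleBroomEntry n α β γ (n + l) j * x (n + l) = 0 :=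
    sum_eq_zero (by grind [doubleBroomEntry])
  rw [divergence, sum_range_three_mul_of_pos (by lia), sum_entry_mul_leftEdges, hpath,
    sum_entry_mul_rightEdges _ _ _ _ (by lia)]
  grind [doubleBroomEntry]

lemma divergence_pathVertex {c : ℕ} (hc : c < n) :
    divergence n α β γ x (n + c) = pathFlow n α β x (c + 1) - pathFlow n α β x c := by
  rw [divergence, sum_range_three_mul_of_pos (by lia), sum_entry_mul_leftEdges,
    sum_entry_mul_pathEdges, sum_entry_mul_rightEdges _ _ _ _ (by lia)]
  grind [doubleBroomEntry, pathFlow]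

lemma divergence_rightLeaf {j : ℕ} (hj : j < n) :
    divergence n α β γ x (2 * n + j) = β * x (2 * n + j) := by
  have hpath : ∑ l ∈ Ico 1 n, doubleBroomEntry n α β γ (n + l) (2 * n + j) * x (n + l) = 0 :=
    sum_eq_zero (by grind [doubleBroomEntry])
  rw [divergence, sum_range_three_mul_of_pos (by lia), sum_entry_mul_leftEdges, hpath,
    sum_entry_mul_rightEdges _ _ _ _ (by lia)]
  grind [doubleBroomEntry]

lemma vecMul_doubleBroomMatrix_apply (j : Fin (3 * n)) :
    ((fun i : Fin (3 * n) ↦ x i) ᵥ* doubleBroomMatrix n α β γ) j = divergence n α β γ x j := by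
  rw [divergence, ← Fin.sum_univ_eq_sum_range fun i ↦ doubleBroomEntry n α β γ i j * x i]
  simp only [Matrix.vecMul, dotProduct, doubleBroomMatrix, Matrix.of_apply, mul_comm]

lemma sum_sq_vecMul_doubleBroomMatrix :
    ∑ j, ((fun i : Fin (3 * n) ↦ x i) ᵥ* doubleBroomMatrix n α β γ) j ^ 2 =
      divergenceEnergy n (γ * x 0) (fun j ↦ β * x (j + 1)) (pathFlow n α β x)
        (fun j ↦ β * x (2 * n + j)) := by
  simp only [vecMul_doubleBroomMatrix_apply]
  rw [Fin.sum_univ_eq_sum_range (divergence n α β γ x · ^ 2), sum_range_three_mul, divergenceEnergy]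
  congr! 4 with j hj j hj j hj
  · exact divergence_leftLeaf α β γ x (mem_range.1 hj)
  · exact divergence_pathVertex α β γ x (mem_range.1 hj)
  · exact divergence_rightLeaf α β γ x (mem_range.1 hj)

lemma sum_sq_pathFlow : ∑ c ∈ Ico 1 n, pathFlow n α β x c ^ 2 =
    α ^ 2 * ∑ c ∈ Ico 1 n, x (n + c) ^ 2 := by
  rw [mul_sum]
  exact sum_congr rfl fun c hc ↦ by rw [pathFlow_of_mem_Ico α β x hc, mul_pow]

theorem posSemidef_doubleBroomMatrix_mul_transpose_sub_diagonal (hn : 0 < n) :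
    (doubleBroomMatrix n α β γ * (doubleBroomMatrix n α β γ)ᵀ -
      Matrix.diagonal fun i : Fin (3 * n) ↦
        rowWeight n (n * γ ^ 2 / 4) (β ^ 2 / 36) (α ^ 2 / (9 * n ^ 2)) i).PosSemidef := by
  refine posSemidef_mul_transpose_sub_diagonal_iff.2 fun x ↦ ?_
  obtain ⟨x, rfl⟩ := Fin.val_injective.surjective_comp_right x
  have h := divergenceEnergy.lower_bound (pathFlow_zero α β x) (pathFlow_self α β x hn) (γ * x 0)
  rw [← sum_sq_vecMul_doubleBroomMatrix, sum_sq_pathFlow] at h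
  refine le_trans (le_of_eq ?_) h
  simp only [Function.comp_apply, sum_rowWeight_mul _ _ _ hn (x · ^ 2), mul_pow, ← mul_sum]
  ring

theorem posSemidef_diagonal_sub_doubleBroomMatrix_mul_transpose (hn : 0 < n) :
    ((Matrix.diagonal fun i : Fin (3 * n) ↦
        rowWeight n (2 * n * γ ^ 2) (2 * (n + 1) * β ^ 2) (4 * α ^ 2) i) -
      doubleBroomMatrix n α β γ * (doubleBroomMatrix n α β γ)ᵀ).PosSemidef := by
  refine posSemidef_diagonal_sub_mul_transpose_iff.2 fun x ↦ ?_
  obtain ⟨x, rfl⟩ := Fin.val_injective.surjective_comp_right x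
  have h := divergenceEnergy.upper_bound (pathFlow_zero α β x) (pathFlow_self α β x hn) (γ * x 0)
  rw [← sum_sq_vecMul_doubleBroomMatrix, sum_sq_pathFlow] at h
  refine h.trans_eq ?_
  simp only [Function.comp_apply, sum_rowWeight_mul _ _ _ hn (x · ^ 2), mul_pow, ← mul_sum]
  ring

end DoubleBroom

/-- Spectral bounds for the structured matrix `E` (and its first-row-deleted
version `E'`) from the lower-bound construction. -/
theorem spectral_bounds_E (n : ℕ) (hn : 2 ≤ n) (α β γ : ℝ)
    (hα : 0 < α) (hβ : 0 < β) (hγ : 0 < γ)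
    (E : Matrix (Fin (3 * n)) (Fin (3 * n)) ℝ)
    (hE : ∀ i j : Fin (3 * n), E i j =
      if i.val = 0 then (if j.val < n then γ else 0)
      else if i.val ≤ n then (if j.val + 1 = i.val then β else if j.val = n then -β else 0)
      else if i.val ≤ 2 * n - 1 then
        (if j.val + 1 = i.val then α else if j.val = i.val then -α else 0)
      else (if j.val = 2 * n - 1 then -β else if j.val = i.val then β else 0))
    (E' : Matrix (Fin (3 * n - 1)) (Fin (3 * n)) ℝ)
    (hE' : ∀ (i : Fin (3 * n - 1)) (j : Fin (3 * n)),
      E' i j = E ⟨i.val + 1, by have := i.isLt; omega⟩ j) :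
    (Matrix.PosSemidef (E * Eᵀ -
        min ((n : ℝ) * γ ^ 2 / 4) (min (β ^ 2 / 36) (α ^ 2 / (9 * (n : ℝ) ^ 2))) •
          (1 : Matrix (Fin (3 * n)) (Fin (3 * n)) ℝ)) ∧
      Matrix.PosSemidef
        (max (2 * (n : ℝ) * γ ^ 2) (max (2 * ((n : ℝ) + 1) * β ^ 2) (4 * α ^ 2)) •
          (1 : Matrix (Fin (3 * n)) (Fin (3 * n)) ℝ) - E * Eᵀ)) ∧
    (Matrix.PosSemidef (E' * E'ᵀ -
        min (β ^ 2 / 36) (α ^ 2 / (9 * (n : ℝ) ^ 2)) •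
          (1 : Matrix (Fin (3 * n - 1)) (Fin (3 * n - 1)) ℝ)) ∧
      Matrix.PosSemidef
        (max (2 * ((n : ℝ) + 1) * β ^ 2) (4 * α ^ 2) •
          (1 : Matrix (Fin (3 * n - 1)) (Fin (3 * n - 1)) ℝ) - E' * E'ᵀ)) := by
  have hn₀ : 0 < n := by lia
  obtain rfl : E = doubleBroomMatrix n α β γ := Matrix.ext hE
  let next (i : Fin (3 * n - 1)) : Fin (3 * n) := ⟨i + 1, by lia⟩
  have hnext : Function.Injective next := fun i j h ↦ by simpa [next, Fin.ext_iff] using h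
  obtain rfl : E' = (doubleBroomMatrix n α β γ).submatrix next id := Matrix.ext hE'
  have hlower := posSemidef_doubleBroomMatrix_mul_transpose_sub_diagonal α β γ hn₀
  have hupper := posSemidef_diagonal_sub_doubleBroomMatrix_mul_transpose α β γ hn₀
  have hlower' := hlower.submatrix next
  have hupper' := hupper.submatrix next
  rw [Matrix.submatrix_sub, Pi.sub_apply, Pi.sub_apply, Matrix.submatrix_diagonal _ _ hnext]
    at hlower' hupper'
  exact ⟨⟨posSemidef_sub_smul_one_of_forall_le hlower fun i ↦ min_le_rowWeight ..,
      posSemidef_smul_one_sub_of_forall_le hupper fun i ↦ rowWeight_le_max ..⟩,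
    posSemidef_sub_smul_one_of_forall_le hlower' fun i ↦ min_le_rowWeight_succ ..,
    posSemidef_smul_one_sub_of_forall_le hupper' fun i ↦ rowWeight_succ_le_max ..⟩
end

section
/- Let μx, μy, μxy, μyx ≥ 0 and Ly, Lxy > 0 satisfy: μyx > 0, Ly > 4μy, Lxy > 18μyx, μxy ≤ μyx, and μx·μy ≤ μyx². Define δ̃ := μx + 4μxy²/Ly, α := Lxy/2, n := ⌊Lxy/(6μyx)⌋, and q := (√(4α² + δ̃μy) − √(δ̃μy)) / (√(4α² + δ̃μy) + √(δ̃μy)). Then q^{−n} ≤ 2. -/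
/-!
Put `p = δ̃ μy`, `s = √p` and `A = √(4α² + p)`, so that `q = (A - s) / (A + s) = 1 - 2s / (A + s)`.
Bernoulli's inequality gives `q ^ n ≥ 1 - 2ns / (A + s)`, which is at least `1/2` as soon as
`4ns ≤ A`. Since `A ≥ 2α = Lxy` and `n ≤ Lxy / (6 μyx)`, the bound `s ≤ (3/2) μyx` suffices, and
it follows from `p ≤ μx μy + μxy² ≤ 2 μyx²`.
-/

section OrderedField

variable {K : Type*} [Field K] [LinearOrder K] [IsStrictOrderedRing K]

theorem one_sub_mul_le_sub_div_add_pow {A s : K} (hA : 0 ≤ A) (hAs : 0 < A + s) (n : ℕ) :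
    1 - n * (2 * s / (A + s)) ≤ ((A - s) / (A + s)) ^ n := by
  have hr : (A - s) / (A + s) - 1 = -(2 * s / (A + s)) := by field_simp; ring
  have hr_ge : -1 ≤ (A - s) / (A + s) := by
    rw [le_div_iff₀ hAs]
    linarith
  calc 1 - n * (2 * s / (A + s)) = 1 + n * ((A - s) / (A + s) - 1) := by rw [hr]; ring
    _ ≤ ((A - s) / (A + s)) ^ n := one_add_mul_sub_le_pow hr_ge n

theorem sub_div_add_zpow_neg_le_two {A s : K} {n : ℕ} (hA : 0 ≤ A) (hAs : 0 < A + s)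
    (hn : 4 * (n * s) ≤ A + s) : ((A - s) / (A + s)) ^ (-(n : ℤ)) ≤ 2 := by
  have hn_half : n * (2 * s / (A + s)) ≤ 1 / 2 := by
    rw [← mul_div_assoc, div_le_iff₀ hAs]
    linarith
  have hpow : 2⁻¹ ≤ ((A - s) / (A + s)) ^ n := by
    linarith [one_sub_mul_le_sub_div_add_pow hA hAs n]
  rw [zpow_neg, zpow_natCast]
  exact inv_le_of_inv_le₀ two_pos hpow

theorem add_four_mul_sq_div_mul_le {L m : K} (hL : 0 < L) (hm : 4 * m ≤ L) (a b : K) :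
    (a + 4 * b ^ 2 / L) * m ≤ a * m + b ^ 2 := by
  have hb : 4 * b ^ 2 / L * m ≤ b ^ 2 := by
    calc 4 * b ^ 2 / L * m = b ^ 2 * (4 * m / L) := by ring
      _ ≤ b ^ 2 := mul_le_of_le_one_right (sq_nonneg b) ((div_le_one hL).2 hm)
  linarith

theorem floor_div_mul_le [FloorSemiring K] {a b : K} (ha : 0 ≤ a) (hb : 0 < b) :
    ⌊a / b⌋₊ * b ≤ a :=
  (le_div_iff₀ hb).1 (Nat.floor_le (div_nonneg ha hb.le))

end OrderedField

theorem sqrt_ratio_zpow_neg_le_two {α p : ℝ} {n : ℕ} (hα : 0 < α) (hp : 0 ≤ p)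
    (hn : 2 * (n * √p) ≤ α) :
    ((√(4 * α ^ 2 + p) - √p) / (√(4 * α ^ 2 + p) + √p)) ^ (-(n : ℤ)) ≤ 2 := by
  have hA : 2 * α ≤ √(4 * α ^ 2 + p) := Real.le_sqrt_of_sq_le (by linarith)
  have hs : 0 ≤ √p := Real.sqrt_nonneg p
  exact sub_div_add_zpow_neg_le_two (by linarith) (by linarith) (by linarith)

theorem q_pow_neg_n_le_two_general (μx μy μxy μyx Ly Lxy : ℝ)
    (hμx : 0 ≤ μx) (hμy : 0 ≤ μy) (hμyx : 0 < μyx) (hLy : 0 < Ly) (hLxy : 0 < Lxy)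
    (hLy4 : 4 * μy ≤ Ly) (hxyyx : |μxy| ≤ μyx) (hprod : μx * μy ≤ μyx ^ 2)
    (dt α q : ℝ) (n : ℕ)
    (hdt : dt = μx + 4 * μxy ^ 2 / Ly)
    (hα : α = Lxy / 2)
    (hn : n = ⌊Lxy / (6 * μyx)⌋₊)
    (hq : q = (√(4 * α ^ 2 + dt * μy) - √(dt * μy)) /
        (√(4 * α ^ 2 + dt * μy) + √(dt * μy))) :
    q ^ (-(n : ℤ)) ≤ 2 := by
  have hp_nonneg : 0 ≤ dt * μy := by rw [hdt]; positivity
  have hp_le : dt * μy ≤ 2 * μyx ^ 2 := by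
    calc dt * μy ≤ μx * μy + μxy ^ 2 := hdt ▸ add_four_mul_sq_div_mul_le hLy hLy4 μx μxy
      _ ≤ 2 * μyx ^ 2 := by linarith [sq_le_sq.2 (hxyyx.trans (le_abs_self μyx))]
  have hs_le : √(dt * μy) ≤ 3 / 2 * μyx :=
    Real.sqrt_le_iff.2 ⟨by positivity, by linarith [sq_nonneg μyx]⟩
  have hn_le : n * (6 * μyx) ≤ Lxy := hn ▸ floor_div_mul_le hLxy.le (by positivity)
  have hns_le : 2 * (n * √(dt * μy)) ≤ α := by
    calc 2 * (n * √(dt * μy)) ≤ 2 * (n * (3 / 2 * μyx)) := by gcongr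
      _ ≤ α := by linarith
  exact hq ▸ sqrt_ratio_zpow_neg_le_two (by linarith) hp_nonneg hns_le

/-- The quantity `q^{-n}` is bounded by `2`, where `n = ⌊Lxy/(6μyx)⌋` and `q` is
the smaller root of the characteristic polynomial of the linear recurrence. -/
theorem q_pow_neg_n_le_two (μx μy μxy μyx Ly Lxy : ℝ)
    (hμx : 0 ≤ μx) (hμy : 0 ≤ μy) (hμxy : 0 ≤ μxy) (hμyx' : 0 ≤ μyx)
    (hLy : 0 < Ly) (hLxy : 0 < Lxy)
    (hμyx : 0 < μyx) (hLy4 : 4 * μy < Ly) (hLxy18 : 18 * μyx < Lxy)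
    (hxyyx : μxy ≤ μyx) (hprod : μx * μy ≤ μyx ^ 2)
    (dt α q : ℝ) (n : ℕ)
    (hdt : dt = μx + 4 * μxy ^ 2 / Ly)
    (hα : α = Lxy / 2)
    (hn : n = ⌊Lxy / (6 * μyx)⌋₊)
    (hq : q = (Real.sqrt (4 * α ^ 2 + dt * μy) - Real.sqrt (dt * μy)) /
        (Real.sqrt (4 * α ^ 2 + dt * μy) + Real.sqrt (dt * μy))) :
    q ^ (-(n : ℤ)) ≤ 2 :=
  q_pow_neg_n_le_two_general μx μy μxy μyx Ly Lxy hμx hμy hμyx hLy hLxy hLy4.le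
    ((abs_of_nonneg hμxy).trans_le hxyyx) hprod dt α q n hdt hα hn hq
end

section
/- Let μx, μy, μxy, μyx ≥ 0 and Ly, Lxy > 0 satisfy: μyx > 0, μy > 0, Ly > 4μy, Lxy > 18μyx, μxy ≤ μyx, μx·μy ≤ μyx², and δ̃ := μx + 4μxy²/Ly > 0. Define α := Lxy/2, n := ⌊Lxy/(6μyx)⌋, and q := (√(4α² + δ̃μy) − √(δ̃μy)) / (√(4α² + δ̃μy) + √(δ̃μy)). Then ω := (1−q)(1−q^{n−2})/(1+q^{n−1}) satisfies ω ≤ (n−2)·δ̃·μy/α², and ν := (1−q)(1+q)/(q·(q^{1−n} − q^{n−1})) satisfies ν ≥ 1/(4(n−1)). -/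
/-!
The characteristic equation says `(1 - q)² = q · t / α²` with `t = δ̃μy`, so `1 - q ≤ √t / α`.
Summing geometric series cancels the factors that vanish as `q → 1`: up to a denominator
`≥ 1`, `ω` is `(1 - q)²` times a sum of `n - 2` powers of `q`, and `ν` is `q ^ (n - 2)` divided by
a sum of `n - 1` powers of `q²`. Each power is at most `1`, and Bernoulli's inequality keeps
`q ^ (n - 2)` away from `0`. The choice of `n` makes `(n - 2)√t / α` at most `1 / 2`.
-/

section Coefficients

variable {K : Type*} [Field K]

/-- The quantity `ω` attached to a ratio `q` and an index `n`. The exponents are integers, as in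
the paper, so that nothing is truncated for `n < 2`. -/
def omegaCoeff (q : K) (n : ℕ) : K :=
  (1 - q) * (1 - q ^ ((n : ℤ) - 2)) / (1 + q ^ ((n : ℤ) - 1))

/-- The quantity `ν` attached to a ratio `q` and an index `n`, again with integer exponents. -/
def nuCoeff (q : K) (n : ℕ) : K :=
  (1 - q) * (1 + q) / (q * (q ^ (1 - (n : ℤ)) - q ^ ((n : ℤ) - 1)))

theorem omegaCoeff_add_two (q : K) (m : ℕ) :
    omegaCoeff q (m + 2) = (1 - q) ^ 2 * (∑ i ∈ Finset.range m, q ^ i) / (1 + q ^ (m + 1)) := by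
  have h₂ : ((m + 2 : ℕ) : ℤ) - 2 = (m : ℕ) := by push_cast; ring
  have h₁ : ((m + 2 : ℕ) : ℤ) - 1 = (m + 1 : ℕ) := by push_cast; ring
  rw [omegaCoeff, h₂, h₁, zpow_natCast, zpow_natCast, ← mul_neg_geom_sum q m, sq, mul_assoc]

theorem nuCoeff_add_two {q : K} (hq₀ : q ≠ 0) (hq₁ : q ^ 2 ≠ 1) (m : ℕ) :
    nuCoeff q (m + 2) = q ^ m / ∑ i ∈ Finset.range (m + 1), (q ^ 2) ^ i := by
  have h₁ : ((m + 2 : ℕ) : ℤ) - 1 = (m + 1 : ℕ) := by push_cast; ring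
  have h₁' : 1 - ((m + 2 : ℕ) : ℤ) = -(m + 1 : ℕ) := by push_cast; ring
  have hden : q * ((q ^ (m + 1))⁻¹ - q ^ (m + 1)) =
      (1 - q ^ 2) * (∑ i ∈ Finset.range (m + 1), (q ^ 2) ^ i) / q ^ m := by
    rw [mul_neg_geom_sum]
    field_simp
    ring
  rw [nuCoeff, h₁, h₁', zpow_neg, zpow_natCast, hden, div_div_eq_mul_div,
    show (1 - q) * (1 + q) = 1 - q ^ 2 by ring, mul_div_mul_left _ _ (sub_ne_zero.2 hq₁.symm)]

variable [LinearOrder K] [IsStrictOrderedRing K]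

theorem geom_sum_le_natCast {q : K} (hq₀ : 0 ≤ q) (hq₁ : q ≤ 1) (m : ℕ) :
    ∑ i ∈ Finset.range m, q ^ i ≤ m := by
  simpa using Finset.sum_le_card_nsmul (Finset.range m) (q ^ ·) 1
    fun i _ ↦ pow_le_one₀ hq₀ hq₁

theorem omegaCoeff_add_two_le {q : K} (hq₀ : 0 ≤ q) (hq₁ : q ≤ 1) (m : ℕ) :
    omegaCoeff q (m + 2) ≤ m * (1 - q) ^ 2 := by
  have hpow : 0 ≤ q ^ (m + 1) := by positivity
  calc omegaCoeff q (m + 2)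
      = (1 - q) ^ 2 * (∑ i ∈ Finset.range m, q ^ i) / (1 + q ^ (m + 1)) := omegaCoeff_add_two q m
    _ ≤ (1 - q) ^ 2 * ∑ i ∈ Finset.range m, q ^ i :=
        div_le_self (by positivity) (le_add_of_nonneg_right hpow)
    _ ≤ (1 - q) ^ 2 * m := by gcongr; exact geom_sum_le_natCast hq₀ hq₁ m
    _ = m * (1 - q) ^ 2 := mul_comm _ _

theorem pow_div_le_nuCoeff_add_two {q : K} (hq₀ : 0 < q) (hq₁ : q < 1) (m : ℕ) :
    q ^ m / (m + 1) ≤ nuCoeff q (m + 2) := by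
  have hsq : q ^ 2 < 1 := pow_lt_one₀ hq₀.le hq₁ two_ne_zero
  have hsum : ∑ i ∈ Finset.range (m + 1), (q ^ 2) ^ i ≤ m + 1 := by
    exact_mod_cast geom_sum_le_natCast (sq_nonneg q) hsq.le (m + 1)
  rw [nuCoeff_add_two hq₀.ne' hsq.ne]
  gcongr

end Coefficients

section CharRoot

/-- The smallest root `q` of the characteristic polynomial `(2 + t / α²) q = 1 + q²`; in the paper
`t = δ̃μy`. -/
noncomputable def charRoot (α t : ℝ) : ℝ :=
  (√(4 * α ^ 2 + t) - √t) / (√(4 * α ^ 2 + t) + √t)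

variable {α t : ℝ}

theorem charRoot_pos (hα : α ≠ 0) (ht : 0 ≤ t) : 0 < charRoot α t := by
  have hlt : √t < √(4 * α ^ 2 + t) :=
    Real.sqrt_lt_sqrt ht (lt_add_of_pos_left t (by positivity))
  exact div_pos (sub_pos.2 hlt) (by positivity)

theorem charRoot_lt_one (ht : 0 < t) : charRoot α t < 1 := by
  have hs : 0 < √t := Real.sqrt_pos.2 ht
  rw [charRoot, div_lt_one (by positivity)]
  linarith

theorem charRoot_characteristic_eq (hα : α ≠ 0) (ht : 0 ≤ t) :
    (2 + t / α ^ 2) * charRoot α t = 1 + charRoot α t ^ 2 := by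
  have hA : √(4 * α ^ 2 + t) ^ 2 = 4 * α ^ 2 + t := Real.sq_sqrt (by positivity)
  have hs : √t ^ 2 = t := Real.sq_sqrt ht
  have hsum : √(4 * α ^ 2 + t) + √t ≠ 0 := by positivity
  rw [charRoot]
  generalize √(4 * α ^ 2 + t) = A at *
  generalize √t = s at *
  field_simp
  linear_combination t * hA - (4 * α ^ 2 + t) * hs

theorem one_sub_charRoot_sq_le (hα : α ≠ 0) (ht : 0 < t) :
    (1 - charRoot α t) ^ 2 ≤ t / α ^ 2 :=
  calc (1 - charRoot α t) ^ 2
      = charRoot α t * (t / α ^ 2) := by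
        linear_combination -charRoot_characteristic_eq hα ht.le
    _ ≤ t / α ^ 2 := mul_le_of_le_one_left (by positivity) (charRoot_lt_one ht).le

theorem one_sub_charRoot_le (hα : 0 < α) (ht : 0 < t) : 1 - charRoot α t ≤ √t / α :=
  calc 1 - charRoot α t
      ≤ √(t / α ^ 2) := Real.le_sqrt_of_sq_le (one_sub_charRoot_sq_le hα.ne' ht)
    _ = √t / α := by rw [Real.sqrt_div ht.le, Real.sqrt_sq hα.le]

theorem one_sub_mul_le_charRoot_pow (hα : 0 < α) (ht : 0 < t) (m : ℕ) :
    1 - m * √t / α ≤ charRoot α t ^ m := by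
  have hpos : 0 < charRoot α t := charRoot_pos hα.ne' ht.le
  calc 1 - m * √t / α = 1 - m * (√t / α) := by rw [mul_div_assoc]
    _ ≤ 1 - m * (1 - charRoot α t) := by gcongr; exact one_sub_charRoot_le hα ht
    _ = 1 + m * (charRoot α t - 1) := by ring
    _ ≤ charRoot α t ^ m := one_add_mul_sub_le_pow (by linarith) m

end CharRoot

theorem omega_nu_bounds_general {α t : ℝ} {n : ℕ} (hα : 0 < α) (ht : 0 < t) (hn : 2 ≤ n) :
    omegaCoeff (charRoot α t) n ≤ ((n : ℝ) - 2) * t / α ^ 2 ∧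
      (1 - ((n : ℝ) - 2) * √t / α) / ((n : ℝ) - 1) ≤ nuCoeff (charRoot α t) n := by
  obtain ⟨m, rfl⟩ := Nat.exists_eq_add_of_le' hn
  have hq₀ : 0 < charRoot α t := charRoot_pos hα.ne' ht.le
  have hq₁ : charRoot α t < 1 := charRoot_lt_one ht
  have h₂ : ((m + 2 : ℕ) : ℝ) - 2 = m := by push_cast; ring
  have h₁ : ((m + 2 : ℕ) : ℝ) - 1 = m + 1 := by push_cast; ring
  rw [h₂, h₁]
  constructor
  · calc omegaCoeff (charRoot α t) (m + 2)
        ≤ m * (1 - charRoot α t) ^ 2 := omegaCoeff_add_two_le hq₀.le hq₁.le m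
      _ ≤ m * (t / α ^ 2) := by gcongr; exact one_sub_charRoot_sq_le hα.ne' ht
      _ = m * t / α ^ 2 := (mul_div_assoc _ _ _).symm
  · calc (1 - m * √t / α) / (m + 1)
        ≤ charRoot α t ^ m / (m + 1) := by gcongr; exact one_sub_mul_le_charRoot_pow hα ht m
      _ ≤ nuCoeff (charRoot α t) (m + 2) := pow_div_le_nuCoeff_add_two hq₀ hq₁ m

theorem add_div_mul_le_two_mul_sq {μx μy μxy μyx Ly : ℝ} (hLy : 0 < Ly) (hLy4 : 4 * μy ≤ Ly)
    (hxyyx : μxy ^ 2 ≤ μyx ^ 2) (hprod : μx * μy ≤ μyx ^ 2) :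
    (μx + 4 * μxy ^ 2 / Ly) * μy ≤ 2 * μyx ^ 2 := by
  have hcoupling : 4 * μxy ^ 2 / Ly * μy ≤ μyx ^ 2 :=
    calc 4 * μxy ^ 2 / Ly * μy = μxy ^ 2 * (4 * μy / Ly) := by ring
      _ ≤ μxy ^ 2 := mul_le_of_le_one_right (sq_nonneg _) ((div_le_one hLy).2 hLy4)
      _ ≤ μyx ^ 2 := hxyyx
  linarith

theorem floor_sub_two_mul_sqrt_div_le_half {μ L t : ℝ} (hμ : 0 < μ) (hL : 0 < L)
    (ht : t ≤ 2 * μ ^ 2) : ((⌊L / (6 * μ)⌋₊ : ℝ) - 2) * √t / (L / 2) ≤ 1 / 2 := by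
  have hfloor : (⌊L / (6 * μ)⌋₊ : ℝ) - 2 ≤ L / (6 * μ) := by
    linarith [Nat.floor_le (show 0 ≤ L / (6 * μ) by positivity)]
  have hsqrt : √t ≤ 3 / 2 * μ :=
    Real.sqrt_le_iff.2 ⟨by positivity, by rw [mul_pow]; linarith [sq_nonneg μ]⟩
  calc ((⌊L / (6 * μ)⌋₊ : ℝ) - 2) * √t / (L / 2)
      ≤ L / (6 * μ) * (3 / 2 * μ) / (L / 2) := by gcongr
    _ = 1 / 2 := by field_simp; norm_num

/-- Bounds on the auxiliary quantities `ω` and `ν` built from the root `q` of the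
characteristic polynomial: `ω ≤ (n−2)δ̃μy/α²` and `ν ≥ 1/(4(n−1))`. -/
theorem omega_nu_bounds (μx μy μxy μyx Ly Lxy : ℝ)
    (hμx : 0 ≤ μx) (hμy' : 0 ≤ μy) (hμxy : 0 ≤ μxy) (hμyx' : 0 ≤ μyx)
    (hLy : 0 < Ly) (hLxy : 0 < Lxy)
    (hμyx : 0 < μyx) (hμy : 0 < μy) (hLy4 : 4 * μy < Ly) (hLxy18 : 18 * μyx < Lxy)
    (hxyyx : μxy ≤ μyx) (hprod : μx * μy ≤ μyx ^ 2)
    (dt α q ω ν : ℝ) (n : ℕ)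
    (hdt : dt = μx + 4 * μxy ^ 2 / Ly) (hdtpos : 0 < dt)
    (hα : α = Lxy / 2)
    (hn : n = ⌊Lxy / (6 * μyx)⌋₊)
    (hq : q = (Real.sqrt (4 * α ^ 2 + dt * μy) - Real.sqrt (dt * μy)) /
        (Real.sqrt (4 * α ^ 2 + dt * μy) + Real.sqrt (dt * μy)))
    (hω : ω = (1 - q) * (1 - q ^ ((n : ℤ) - 2)) / (1 + q ^ ((n : ℤ) - 1)))
    (hν : ν = (1 - q) * (1 + q) / (q * (q ^ (1 - (n : ℤ)) - q ^ ((n : ℤ) - 1)))) :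
    ω ≤ ((n : ℝ) - 2) * dt * μy / α ^ 2 ∧ 1 / (4 * ((n : ℝ) - 1)) ≤ ν := by
  subst hω hν hq hn hα
  have hn : 3 ≤ ⌊Lxy / (6 * μyx)⌋₊ := Nat.le_floor <| by
    rw [le_div_iff₀ (by positivity)]; push_cast; linarith
  have hn' : (3 : ℝ) ≤ ⌊Lxy / (6 * μyx)⌋₊ := mod_cast hn
  have ht : dt * μy ≤ 2 * μyx ^ 2 :=
    hdt ▸ add_div_mul_le_two_mul_sq hLy hLy4.le (by gcongr) hprod
  have hhalf := floor_sub_two_mul_sqrt_div_le_half hμyx hLxy ht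
  have ⟨hω, hν⟩ :=
    omega_nu_bounds_general (half_pos hLxy) (mul_pos hdtpos hμy) (Nat.le_of_succ_le hn)
  refine ⟨by rwa [← mul_assoc] at hω, le_trans ?_ hν⟩
  rw [← div_div]
  gcongr <;> linarith
end

section
/- Let L ≥ μ̄ ≥ 0 and d ≥ 1 an integer. Define B ∈ ℝ^{d×d} (1-indexed) by B(i,i) = (L+μ̄)/2 for 1 ≤ i ≤ d, B(i,i+1) = −(L−μ̄)/2 for 1 ≤ i ≤ d−1, and all other entries 0. Then μ̄²·I_d ⪯ Bᵀ·B ⪯ L²·I_d; equivalently, every singular value σ of B satisfies μ̄ ≤ σ ≤ L. -/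
open scoped Matrix

/-!
Write `B = a • 1 - b • S` with `S` the nilpotent upper shift, `a = (L + μ) / 2` and
`b = (L - μ) / 2`, so that `a - b = μ` and `a + b = L`. Each of the differences
`Bᴴ * B - (a - b) ^ 2 • 1` and `(a + b) ^ 2 • 1 - Bᴴ * B` is a nonnegative combination of a Gram
matrix, `(1 - S)ᴴ * (1 - S)` resp. `(1 + S)ᴴ * (1 + S)`, and of `1 - Sᴴ * S`, which is the
projection onto the first coordinate.
-/

section Contraction

variable {n R : Type*} [Fintype n] [DecidableEq n] [CommRing R] [StarRing R] {a b : R}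

theorem gram_smul_one_sub_smul_sub_sq (ha : IsSelfAdjoint a) (hb : IsSelfAdjoint b)
    (N : Matrix n n R) :
    (a • 1 - b • N)ᴴ * (a • 1 - b • N) - (a - b) ^ 2 • 1 =
      (a * b) • ((1 - N)ᴴ * (1 - N)) + (b * (a - b)) • (1 - Nᴴ * N) := by
  simp only [Matrix.conjTranspose_sub, Matrix.conjTranspose_smul, Matrix.conjTranspose_one,
    ha.star_eq, hb.star_eq, sub_mul, mul_sub, smul_mul_assoc, mul_smul_comm, one_mul, mul_one]
  module

theorem sq_sub_gram_smul_one_sub_smul (ha : IsSelfAdjoint a) (hb : IsSelfAdjoint b)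
    (N : Matrix n n R) :
    (a + b) ^ 2 • 1 - (a • 1 - b • N)ᴴ * (a • 1 - b • N) =
      (a * b) • ((1 + N)ᴴ * (1 + N)) + (b * (a + b)) • (1 - Nᴴ * N) := by
  simp only [Matrix.conjTranspose_sub, Matrix.conjTranspose_add, Matrix.conjTranspose_smul,
    Matrix.conjTranspose_one, ha.star_eq, hb.star_eq, sub_mul, mul_sub, add_mul, mul_add,
    smul_mul_assoc, mul_smul_comm, one_mul, mul_one]
  module

variable [PartialOrder R] [StarOrderedRing R] {N : Matrix n n R}

theorem posSemidef_gram_smul_one_sub_smul_sub_sq (hb : 0 ≤ b) (hba : b ≤ a)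
    (hN : (1 - Nᴴ * N).PosSemidef) :
    ((a • 1 - b • N)ᴴ * (a • 1 - b • N) - (a - b) ^ 2 • 1).PosSemidef := by
  have ha : 0 ≤ a := hb.trans hba
  rw [gram_smul_one_sub_smul_sub_sq (.of_nonneg ha) (.of_nonneg hb)]
  exact ((Matrix.posSemidef_conjTranspose_mul_self _).smul (smul_nonneg ha hb)).add
    (hN.smul (smul_nonneg hb (sub_nonneg.2 hba)))

theorem posSemidef_sq_sub_gram_smul_one_sub_smul (ha : 0 ≤ a) (hb : 0 ≤ b)
    (hN : (1 - Nᴴ * N).PosSemidef) :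
    ((a + b) ^ 2 • 1 - (a • 1 - b • N)ᴴ * (a • 1 - b • N)).PosSemidef := by
  rw [sq_sub_gram_smul_one_sub_smul (.of_nonneg ha) (.of_nonneg hb)]
  exact ((Matrix.posSemidef_conjTranspose_mul_self _).smul (smul_nonneg ha hb)).add
    (hN.smul (smul_nonneg hb (add_nonneg ha hb)))

end Contraction

section UpperShift

/-- The nilpotent upper shift `(x₀, …, x_{d-1}) ↦ (x₁, …, x_{d-1}, 0)` as a matrix: ones on the
superdiagonal, zeros elsewhere. -/
def upperShift (R : Type*) [Zero R] [One R] (d : ℕ) : Matrix (Fin d) (Fin d) R :=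
  Matrix.of fun i j => if j.val = i.val + 1 then 1 else 0

theorem upperShift_conjTranspose_mul_self (R : Type*) [Semiring R] [StarRing R] (d : ℕ) :
    (upperShift R d)ᴴ * upperShift R d = Matrix.diagonal fun i => if i.val = 0 then 0 else 1 := by
  ext ⟨i, hi⟩ j
  cases i with
  | zero => simp [upperShift, Matrix.mul_apply, Matrix.diagonal_apply]
  | succ i =>
    rw [Matrix.mul_apply, Finset.sum_eq_single ⟨i, by omega⟩]
    · simp [upperShift, Matrix.diagonal_apply, Fin.ext_iff, eq_comm]
    · intro k _ hk
      have hik : i ≠ k.val := fun h => hk (Fin.ext h.symm)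
      simp [upperShift, hik]
    · simp

theorem posSemidef_one_sub_upperShift_conjTranspose_mul_self (R : Type*) [Ring R] [PartialOrder R]
    [StarRing R] [StarOrderedRing R] (d : ℕ) :
    (1 - (upperShift R d)ᴴ * upperShift R d).PosSemidef := by
  rw [upperShift_conjTranspose_mul_self, ← Matrix.diagonal_one, Matrix.diagonal_sub]
  refine .diagonal fun i => ?_
  dsimp only [Pi.zero_apply]
  split_ifs <;> simp

end UpperShift

theorem bidiagonal_singular_value_bounds_general {R : Type*} [CommRing R] [PartialOrder R]
    [StarRing R] [StarOrderedRing R] {d : ℕ} {a b : R} (hb : 0 ≤ b) (hba : b ≤ a)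
    {B : Matrix (Fin d) (Fin d) R}
    (hB : ∀ i j : Fin d, B i j = if j = i then a else if j.val = i.val + 1 then -b else 0) :
    (Bᴴ * B - (a - b) ^ 2 • 1).PosSemidef ∧ ((a + b) ^ 2 • 1 - Bᴴ * B).PosSemidef := by
  have hBS : B = a • 1 - b • upperShift R d := by
    ext i j
    rw [hB]
    rcases eq_or_ne j i with rfl | hji
    · simp [upperShift]
    · rw [if_neg hji]
      split_ifs with hsucc <;> simp [upperShift, Matrix.one_apply_ne hji.symm, hsucc]
  have hS := posSemidef_one_sub_upperShift_conjTranspose_mul_self R d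
  rw [hBS]
  exact ⟨posSemidef_gram_smul_one_sub_smul_sub_sq hb hba hS,
    posSemidef_sq_sub_gram_smul_one_sub_smul (hb.trans hba) hb hS⟩

/-- The bidiagonal matrix with diagonal `(L+μ̄)/2` and superdiagonal `−(L−μ̄)/2`
has all singular values between `μ̄` and `L`: `μ̄² I ⪯ BᵀB ⪯ L² I`. -/
theorem bidiagonal_singular_value_bounds (d : ℕ) (hd : 1 ≤ d) (L μ : ℝ)
    (hμ : 0 ≤ μ) (hL : μ ≤ L)
    (B : Matrix (Fin d) (Fin d) ℝ)
    (hB : ∀ i j : Fin d, B i j =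
      if j = i then (L + μ) / 2
      else if j.val = i.val + 1 then -((L - μ) / 2) else 0) :
    Matrix.PosSemidef (Bᵀ * B - μ ^ 2 • (1 : Matrix (Fin d) (Fin d) ℝ)) ∧
    Matrix.PosSemidef (L ^ 2 • (1 : Matrix (Fin d) (Fin d) ℝ) - Bᵀ * B) := by
  simpa [Matrix.conjTranspose_eq_transpose_of_trivial, ← sub_div, ← add_div] using
    bidiagonal_singular_value_bounds_general (by linarith) (by linarith) hB
end

section
/- Let μx, μy > 0, μxy, μyx ≥ 0, Lx, Ly > 0, set μ̄ := max{μxy, μyx}, and assume Lxy > 18·max{μ̄, √(μx·μy)}. Define q := (Lxy² + μx·μy)/(μ̄² + μx·μy) and ρ := (√q − 1)/(√q + 1). Then ρ ≥ 4/5. Moreover, if additionally μx·μy ≥ max{μxy², μyx²}, then ρ ≥ 1 − √8/√κxy, where κxy := Lxy²/(δx·δy) with δx := μx + μxy²/Ly and δy := μy + μyx²/Lx. -/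
/-!
The map `q ↦ (√q - 1) / (√q + 1) = 1 - 2 / (√q + 1)` is increasing, so both bounds come from lower
bounds on `q`. Bounding `μ̄²` and `μxμy` by their maximum gives `q ≥ 81`, and the factor is `4/5` at
`q = 9²`. If `μ̄² ≤ μxμy`, the denominator of `q` is at most `2μxμy ≤ 2δxδy`, so `q ≥ κxy / 2`, and
the factor is at least `1 - 2 / √q`.
-/

/-- The linear convergence factor `(√q - 1) / (√q + 1)` attached to a condition number `q`, defined
for every real `q`; since `√q = 0` for `q < 0`, it is `-1` there. -/
noncomputable def contractionFactor (q : ℝ) : ℝ := (√q - 1) / (√q + 1)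

theorem contractionFactor_eq_one_sub (q : ℝ) : contractionFactor q = 1 - 2 / (√q + 1) := by
  unfold contractionFactor
  field_simp
  ring

theorem contractionFactor_monotone : Monotone contractionFactor := by
  intro q r hqr
  simp only [contractionFactor_eq_one_sub]
  gcongr

theorem contractionFactor_sq {r : ℝ} (hr : 0 ≤ r) :
    contractionFactor (r ^ 2) = (r - 1) / (r + 1) := by
  rw [contractionFactor, Real.sqrt_sq hr]

theorem one_sub_two_div_sqrt_le_contractionFactor {q : ℝ} (hq : 0 < q) :
    1 - 2 / √q ≤ contractionFactor q := by
  rw [contractionFactor_eq_one_sub]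
  gcongr
  exact le_add_of_nonneg_right zero_le_one

theorem one_sub_sqrt_eight_div_sqrt_le_contractionFactor {κ q : ℝ} (hκ : 0 < κ) (hκq : κ / 2 ≤ q) :
    1 - √8 / √κ ≤ contractionFactor q := by
  have sqrt_eight : √8 = 2 * √2 := by
    rw [show (8 : ℝ) = 2 ^ 2 * 2 by norm_num, Real.sqrt_mul (by positivity),
      Real.sqrt_sq zero_le_two]
  calc 1 - √8 / √κ = 1 - 2 / √(κ / 2) := by
        rw [sqrt_eight, Real.sqrt_div hκ.le, div_div_eq_mul_div]
    _ ≤ contractionFactor (κ / 2) := one_sub_two_div_sqrt_le_contractionFactor (half_pos hκ)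
    _ ≤ contractionFactor q := contractionFactor_monotone hκq

section OrderedField

variable {K : Type*} [Field K] [LinearOrder K] [IsStrictOrderedRing K] {a b c d l : K}

theorem half_le_add_div_add_of_mul_max_le (hb : 0 ≤ b) (hab : 0 < a + b) (hc : 0 ≤ c)
    (h : c * max a b ≤ l) : c / 2 ≤ (l + b) / (a + b) := by
  rw [le_div_iff₀ hab]
  calc c / 2 * (a + b) ≤ c / 2 * (max a b + max a b) := by
        gcongr
        exacts [le_max_left a b, le_max_right a b]
    _ = c * max a b := by ring
    _ ≤ l + b := h.trans (le_add_of_nonneg_right hb)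

theorem div_half_le_add_div_add (hl : 0 ≤ l) (hb : 0 < b) (hab : 0 < a + b) (hle : a ≤ b)
    (hbd : b ≤ d) : l / d / 2 ≤ (l + b) / (a + b) :=
  calc l / d / 2 ≤ l / b / 2 := by gcongr
    _ = l / (b + b) := by rw [div_div, mul_two]
    _ ≤ (l + b) / (a + b) := by
        gcongr
        exact le_add_of_nonneg_right hb.le

end OrderedField

theorem mul_max_sq_le_sq_of_mul_max_sqrt_le {c k m p l : ℝ} (hk : 0 ≤ k) (hck : c ≤ k ^ 2)
    (hm : 0 ≤ m) (hp : 0 ≤ p) (h : k * max m √p ≤ l) : c * max (m ^ 2) p ≤ l ^ 2 := by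
  have max_sq : max (m ^ 2) p = max m √p ^ 2 := by
    rw [(pow_left_monotoneOn (n := 2)).map_max hm (Real.sqrt_nonneg p), Real.sq_sqrt hp]
  calc c * max (m ^ 2) p ≤ k ^ 2 * max m √p ^ 2 := by
        rw [max_sq]
        gcongr
    _ = (k * max m √p) ^ 2 := (mul_pow _ _ _).symm
    _ ≤ l ^ 2 := by gcongr

theorem rho_lower_bounds_general {μx μy μxy μyx Lx Ly Lxy q ρ : ℝ}
    (hμx : 0 < μx) (hμy : 0 < μy) (hLx : 0 < Lx) (hLy : 0 < Ly) (hLxy : Lxy ≠ 0)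
    (hq : q = (Lxy ^ 2 + μx * μy) / (max μxy μyx ^ 2 + μx * μy))
    (hρ : ρ = (√q - 1) / (√q + 1)) :
    (162 * max (max μxy μyx ^ 2) (μx * μy) ≤ Lxy ^ 2 → 4 / 5 ≤ ρ) ∧
      (max (μxy ^ 2) (μyx ^ 2) ≤ μx * μy →
        1 - √8 / √(Lxy ^ 2 / ((μx + μxy ^ 2 / Ly) * (μy + μyx ^ 2 / Lx))) ≤ ρ) := by
  have hμ : 0 < μx * μy := mul_pos hμx hμy
  have hden : 0 < max μxy μyx ^ 2 + μx * μy := by positivity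
  change ρ = contractionFactor q at hρ
  rw [hρ]
  refine ⟨fun hlarge => ?_, fun hsmall => ?_⟩
  · have hq_ge : 9 ^ 2 ≤ q := by
      calc (9 : ℝ) ^ 2 = 162 / 2 := by norm_num
        _ ≤ q := hq ▸ half_le_add_div_add_of_mul_max_le hμ.le hden (by norm_num) hlarge
    calc (4 / 5 : ℝ) = contractionFactor (9 ^ 2) := by
          rw [contractionFactor_sq (by norm_num)]
          norm_num
      _ ≤ contractionFactor q := contractionFactor_monotone hq_ge
  · have hmax_sq : max μxy μyx ^ 2 ≤ max (μxy ^ 2) (μyx ^ 2) :=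
      max_rec' (fun μ => μ ^ 2 ≤ max (μxy ^ 2) (μyx ^ 2)) (le_max_left _ _) (le_max_right _ _)
    have hδ : μx * μy ≤ (μx + μxy ^ 2 / Ly) * (μy + μyx ^ 2 / Lx) := by
      gcongr <;> exact le_add_of_nonneg_right (by positivity)
    apply one_sub_sqrt_eight_div_sqrt_le_contractionFactor (by positivity)
    rw [hq]
    exact div_half_le_add_div_add (sq_nonneg Lxy) hμ hden (hmax_sq.trans hsmall) hδ

/-- Lower bounds on the contraction factor `ρ = (√q−1)/(√q+1)` with
`q = (Lxy² + μxμy)/(μ̄² + μxμy)`: always `ρ ≥ 4/5`, and if moreover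
`μxμy ≥ max{μxy², μyx²}` then `ρ ≥ 1 − √8/√κxy`. -/
theorem rho_lower_bounds (μx μy μxy μyx Lx Ly Lxy : ℝ)
    (hμx : 0 < μx) (hμy : 0 < μy) (hμxy : 0 ≤ μxy) (hμyx : 0 ≤ μyx)
    (hLx : 0 < Lx) (hLy : 0 < Ly)
    (hLxy : Lxy > 18 * max (max μxy μyx) (Real.sqrt (μx * μy)))
    (q ρ : ℝ)
    (hq : q = (Lxy ^ 2 + μx * μy) / ((max μxy μyx) ^ 2 + μx * μy))
    (hρ : ρ = (Real.sqrt q - 1) / (Real.sqrt q + 1)) :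
    ρ ≥ 4 / 5 ∧
      (μx * μy ≥ max (μxy ^ 2) (μyx ^ 2) →
        ρ ≥ 1 - Real.sqrt 8 /
          Real.sqrt (Lxy ^ 2 / ((μx + μxy ^ 2 / Ly) * (μy + μyx ^ 2 / Lx)))) := by
  have hmax : 0 ≤ max μxy μyx := le_max_of_le_left hμxy
  have hLxy_pos : 0 < Lxy := lt_of_le_of_lt (by positivity) hLxy
  exact (rho_lower_bounds_general hμx hμy hLx hLy hLxy_pos.ne' hq hρ).imp_left fun hfactor =>
    hfactor (mul_max_sq_le_sq_of_mul_max_sqrt_le (by norm_num) (by norm_num) hmax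
      (mul_pos hμx hμy).le hLxy.le)
end

section
/- Let α : ℕ → ℝ be defined by α(0) = 1 and α(t+1) = 2/(1 + √(1 + 4/α(t)²)). Then for every t ∈ ℕ: 1/α(t) ≥ (t+2)/2, i.e., α(t) ≤ 2/(t+2). -/
/-!
In terms of the reciprocals `x t = 1 / α t` the recursion reads
`x (t + 1) = (1 + √(1 + 4 (x t)²)) / 2`.
Since `√(1 + 4 x²) ≥ 2 x`, each step increases `x` by at least `1 / 2`.
-/

/-- One step `a ↦ 2 / (1 + √(1 + 4 / a²))` of the recursion for Nesterov's stepsizes. It is total on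
`ℝ`, but only nonzero arguments are meaningful: division by zero gives the value `1` at `a = 0`. -/
noncomputable def nesterovStep (a : ℝ) : ℝ :=
  2 / (1 + √(1 + 4 / a ^ 2))

theorem nesterovStep_pos (a : ℝ) : 0 < nesterovStep a := by
  unfold nesterovStep
  positivity

theorem inv_nesterovStep (a : ℝ) : (nesterovStep a)⁻¹ = (1 + √(1 + 4 * a⁻¹ ^ 2)) / 2 := by
  rw [nesterovStep, inv_div, inv_pow, div_eq_mul_inv 4]

theorem inv_add_half_le_inv_nesterovStep (a : ℝ) : a⁻¹ + 1 / 2 ≤ (nesterovStep a)⁻¹ := by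
  have two_mul_le_sqrt : 2 * a⁻¹ ≤ √(1 + 4 * a⁻¹ ^ 2) := Real.le_sqrt_of_sq_le (by linarith)
  rw [inv_nesterovStep]
  linarith

theorem pos_of_nesterovStep {α : ℕ → ℝ} (hrec : ∀ t, α (t + 1) = nesterovStep (α t))
    (h0 : 0 < α 0) : ∀ t, 0 < α t
  | 0 => h0
  | t + 1 => hrec t ▸ nesterovStep_pos (α t)

theorem inv_zero_add_div_two_le_inv_of_nesterovStep {α : ℕ → ℝ}
    (hrec : ∀ t, α (t + 1) = nesterovStep (α t)) (t : ℕ) : (α 0)⁻¹ + t / 2 ≤ (α t)⁻¹ := by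
  induction t with
  | zero => simp
  | succ t ih =>
    calc (α 0)⁻¹ + (t + 1 : ℕ) / 2 = (α 0)⁻¹ + t / 2 + 1 / 2 := by push_cast; ring
      _ ≤ (α t)⁻¹ + 1 / 2 := by gcongr
      _ ≤ (nesterovStep (α t))⁻¹ := inv_add_half_le_inv_nesterovStep (α t)
      _ = (α (t + 1))⁻¹ := by rw [hrec]

theorem nesterov_alpha_decay_general (α : ℕ → ℝ) (h0 : 0 < α 0)
    (hrec : ∀ t, α (t + 1) = 2 / (1 + √(1 + 4 / (α t) ^ 2))) (t : ℕ) :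
    ((t : ℝ) + 2 / α 0) / 2 ≤ 1 / α t ∧ α t ≤ 2 / ((t : ℝ) + 2 / α 0) := by
  have lower : ((t : ℝ) + 2 / α 0) / 2 ≤ 1 / α t :=
    calc ((t : ℝ) + 2 / α 0) / 2 = (α 0)⁻¹ + t / 2 := by ring
      _ ≤ (α t)⁻¹ := inv_zero_add_div_two_le_inv_of_nesterovStep hrec t
      _ = 1 / α t := inv_eq_one_div _
  have upper : α t ≤ 1 / (((t : ℝ) + 2 / α 0) / 2) :=
    (le_one_div (by positivity) (pos_of_nesterovStep hrec h0 t)).mp lower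
  exact ⟨lower, by rwa [one_div_div] at upper⟩

/-- Decay rate of Nesterov's stepsize sequence `α(0) = 1`,
`α(t+1) = 2/(1 + √(1 + 4/α(t)²))`: `1/α(t) ≥ (t+2)/2`, i.e. `α(t) ≤ 2/(t+2)`. -/
theorem nesterov_alpha_decay (α : ℕ → ℝ) (h0 : α 0 = 1)
    (hrec : ∀ t, α (t + 1) = 2 / (1 + Real.sqrt (1 + 4 / (α t) ^ 2))) :
    ∀ t : ℕ, ((t : ℝ) + 2) / 2 ≤ 1 / α t ∧ α t ≤ 2 / ((t : ℝ) + 2) := by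
  simpa [h0] using nesterov_alpha_decay_general α (by simp [h0]) hrec
end

section
/- Let h : ℝ^d → ℝ be convex and differentiable with L-Lipschitz gradient, L > 0. Let ᾱ, α ∈ (0,1] satisfy 1/α² = 1/ᾱ² + 1/α. Let z̄, z ∈ ℝ^d and define z⁺ := z − (1/(Lα))·∇h(αz + (1−α)z̄) and z̄⁺ := α·z⁺ + (1−α)·z̄. Then for every w ∈ ℝ^d: (L/2)‖z⁺ − w‖² + (1/α²)·(h(z̄⁺) − h(w)) ≤ (L/2)‖z − w‖² + (1/ᾱ²)·(h(z̄) − h(w)). -/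
/-!
Put `y = αz + (1 − α)z̄` and `g = ∇h(y)`. The averaged iterate `z̄⁺` is then exactly the gradient
step `y − g/L`, so the descent lemma gives `h(z̄⁺) ≤ h(y) − ‖g‖²/(2L)`. Averaging the tangent
inequalities of `h` at `y` towards `w` and `z̄` with weights `α` and `1 − α` gives
`h(y) ≤ αh(w) + (1 − α)h(z̄) + α⟪g, z − w⟫`. After division by `α²`, the terms in `⟪g, z − w⟫` and
`‖g‖²` are precisely those in the expansion of `L/2 ‖z⁺ − w‖²`, and the stepsize relation says
that `1/ᾱ² = (1 − α)/α²`.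
-/

open Set AffineMap InnerProductSpace

section NormedSpace

variable {E F : Type*} [NormedAddCommGroup E] [NormedSpace ℝ E]
  [NormedAddCommGroup F] [NormedSpace ℝ F] {s : Set E} {x y : E}

theorem add_fderivWithin_sub_le_of_convexOn {f : E → ℝ} {f' : E →L[ℝ] ℝ}
    (hf : ConvexOn ℝ s f) (hf' : HasFDerivWithinAt f f' s x) (hx : x ∈ s) (hy : y ∈ s) :
    f x + f' (y - x) ≤ f y := by
  have hderiv : HasDerivWithinAt (f ∘ lineMap x y) (f' (y - x)) (lineMap x y ⁻¹' s) (0 : ℝ) :=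
    HasFDerivWithinAt.comp_hasDerivWithinAt_of_eq 0 hf' hasDerivWithinAt_lineMap
      (mapsTo_preimage _ _) (lineMap_apply_zero x y).symm
  have hslope := (hf.comp_affineMap (lineMap x y)).le_slope_of_hasDerivWithinAt
    (x := 0) (y := 1) (by simpa using hx) (by simpa using hy) zero_lt_one hderiv
  simp only [slope_def_field, Function.comp_apply, lineMap_apply_one, lineMap_apply_zero,
    sub_zero, div_one] at hslope
  linarith

theorem norm_sub_sub_fderivWithin_le_of_lipschitz {f : E → F} {f' : E → E →L[ℝ] F} {L : ℝ}
    (hs : Convex ℝ s) (hf : ∀ u ∈ s, HasFDerivWithinAt f (f' u) s u)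
    (hL : ∀ u ∈ s, ‖f' u - f' x‖ ≤ L * ‖u - x‖) (hx : x ∈ s) (hy : y ∈ s) :
    ‖f y - f x - f' x (y - x)‖ ≤ L / 2 * ‖y - x‖ ^ 2 := by
  let γ : ℝ → E := lineMap x y
  have hγ : MapsTo γ (Icc 0 1) s := fun t ht => hs.lineMap_mem hx hy ht
  let r : ℝ → F := fun t => f (γ t) - f x - t • f' x (y - x)
  have hr : ∀ t ∈ Icc (0 : ℝ) 1,
      HasDerivWithinAt r ((f' (γ t) - f' x) (y - x)) (Icc 0 1) t := fun t ht => by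
    have hfγ := (hf (γ t) (hγ ht)).comp_hasDerivWithinAt t hasDerivWithinAt_lineMap hγ
    simpa [r] using (hfγ.sub_const (f x)).fun_sub
      ((hasDerivWithinAt_id t _).smul_const (f' x (y - x)))
  have hbound : ∀ t ∈ Ico (0 : ℝ) 1,
      ‖(f' (γ t) - f' x) (y - x)‖ ≤ L / 2 * ‖y - x‖ ^ 2 * (2 * t) := fun t ht => by
    have hdist : ‖γ t - x‖ = t * ‖y - x‖ := by
      rw [← dist_eq_norm, dist_lineMap_left, Real.norm_of_nonneg ht.1, dist_comm, dist_eq_norm]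
    calc ‖(f' (γ t) - f' x) (y - x)‖ ≤ ‖f' (γ t) - f' x‖ * ‖y - x‖ :=
          ContinuousLinearMap.le_opNorm _ _
      _ ≤ L * ‖γ t - x‖ * ‖y - x‖ := by
          gcongr
          exact hL _ (hγ (Ico_subset_Icc_self ht))
      _ = L / 2 * ‖y - x‖ ^ 2 * (2 * t) := by rw [hdist]; ring
  have hr_le := image_norm_le_of_norm_deriv_right_le_deriv_boundary
    (fun t ht => (hr t ht).continuousWithinAt)
    (fun t ht => (hr t (Ico_subset_Icc_self ht)).mono_of_mem_nhdsWithin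
      (Icc_mem_nhdsGE_of_mem ht))
    (B := fun t => L / 2 * ‖y - x‖ ^ 2 * t ^ 2) (by simp [r, γ])
    (fun t => by simpa using (hasDerivAt_pow 2 t).const_mul (L / 2 * ‖y - x‖ ^ 2))
    hbound (right_mem_Icc.2 zero_le_one)
  simpa [r, γ] using hr_le

end NormedSpace

section InnerProductSpace

variable {E : Type*} [NormedAddCommGroup E] [InnerProductSpace ℝ E]

theorem half_mul_norm_sub_smul_sub_sq {L a : ℝ} (hL : L ≠ 0) (ha : a ≠ 0) (g z w : E) :
    L / 2 * ‖z - (1 / (L * a)) • g - w‖ ^ 2 =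
      L / 2 * ‖z - w‖ ^ 2 - 1 / a ^ 2 * (a * ⟪g, z - w⟫_ℝ - 1 / (2 * L) * ‖g‖ ^ 2) := by
  rw [sub_right_comm, norm_sub_sq_real, inner_smul_right, real_inner_comm, norm_smul, mul_pow,
    Real.norm_eq_abs, sq_abs]
  field_simp
  ring

variable [CompleteSpace E] {h : E → ℝ}

theorem add_inner_sub_le_of_convexOn {s : Set E} {x y g : E} (hconv : ConvexOn ℝ s h)
    (hg : HasGradientAt h g x) (hx : x ∈ s) (hy : y ∈ s) : h x + ⟪g, y - x⟫_ℝ ≤ h y := by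
  simpa using add_fderivWithin_sub_le_of_convexOn hconv hg.hasFDerivAt.hasFDerivWithinAt hx hy

theorem le_convexCombination_add_inner {s : Set E} {a : ℝ} {z zb w g : E}
    (hconv : ConvexOn ℝ s h) (hg : HasGradientAt h g (a • z + (1 - a) • zb))
    (ha0 : 0 ≤ a) (ha1 : a ≤ 1) (hy : a • z + (1 - a) • zb ∈ s) (hzb : zb ∈ s) (hw : w ∈ s) :
    h (a • z + (1 - a) • zb) ≤ a * h w + (1 - a) * h zb + a * ⟪g, z - w⟫_ℝ := by
  set y := a • z + (1 - a) • zb with y_def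
  have tangent_w := mul_le_mul_of_nonneg_left (add_inner_sub_le_of_convexOn hconv hg hy hw) ha0
  have tangent_zb := mul_le_mul_of_nonneg_left (add_inner_sub_le_of_convexOn hconv hg hy hzb)
    (sub_nonneg.2 ha1)
  have inner_average :
      a * ⟪g, w - y⟫_ℝ + (1 - a) * ⟪g, zb - y⟫_ℝ = -(a * ⟪g, z - w⟫_ℝ) := by
    simp only [y_def, inner_sub_right, inner_add_right, inner_smul_right]
    ring
  linarith

variable {h' : E → E} {L : ℝ}

theorem le_add_inner_add_sq_of_lipschitz_gradient {x : E} (hdiff : ∀ u, HasGradientAt h (h' u) u)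
    (hlip : ∀ u, ‖h' u - h' x‖ ≤ L * ‖u - x‖) (y : E) :
    h y ≤ h x + ⟪h' x, y - x⟫_ℝ + L / 2 * ‖y - x‖ ^ 2 := by
  have hnorm := norm_sub_sub_fderivWithin_le_of_lipschitz (f' := fun u => toDual ℝ E (h' u))
    convex_univ (fun u _ => (hdiff u).hasFDerivAt.hasFDerivWithinAt)
    (fun u _ => by simpa only [← map_sub, LinearIsometryEquiv.norm_map] using hlip u)
    (mem_univ x) (mem_univ y)
  rw [toDual_apply_apply] at hnorm
  linarith [Real.le_norm_self (h y - h x - ⟪h' x, y - x⟫_ℝ)]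

theorem gradient_step_le {x : E} (hL : L ≠ 0) (hdiff : ∀ u, HasGradientAt h (h' u) u)
    (hlip : ∀ u, ‖h' u - h' x‖ ≤ L * ‖u - x‖) :
    h (x - (1 / L) • h' x) ≤ h x - 1 / (2 * L) * ‖h' x‖ ^ 2 := by
  refine (le_add_inner_add_sq_of_lipschitz_gradient hdiff hlip _).trans_eq ?_
  rw [sub_sub_cancel_left, inner_neg_right, inner_smul_right, real_inner_self_eq_norm_sq,
    norm_neg, norm_smul, mul_pow, Real.norm_eq_abs, sq_abs]
  field_simp
  ring

theorem nesterov_one_step_general (hL : 0 < L) (hconv : ConvexOn ℝ univ h)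
    (hdiff : ∀ x, HasGradientAt h (h' x) x)
    (hlip : ∀ x x', ‖h' x - h' x'‖ ≤ L * ‖x - x'‖)
    {a : ℝ} (ha0 : 0 < a) (ha1 : a ≤ 1) (zb z w : E) :
    L / 2 * ‖(z - (1 / (L * a)) • h' (a • z + (1 - a) • zb)) - w‖ ^ 2 +
        (1 / a ^ 2) *
          (h (a • (z - (1 / (L * a)) • h' (a • z + (1 - a) • zb)) + (1 - a) • zb) - h w) ≤
      L / 2 * ‖z - w‖ ^ 2 + (1 - a) / a ^ 2 * (h zb - h w) := by
  set y := a • z + (1 - a) • zb with y_def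
  have averaged_eq_gradient_step :
      a • (z - (1 / (L * a)) • h' y) + (1 - a) • zb = y - (1 / L) • h' y := by
    have hscale : a * (1 / (L * a)) = 1 / L := by field_simp
    rw [smul_sub, smul_smul, hscale, y_def, sub_add_eq_add_sub]
  have hdescent := gradient_step_le hL.ne' hdiff (hlip · y)
  have htangent := le_convexCombination_add_inner hconv (hdiff y) ha0.le ha1
    (mem_univ _) (mem_univ zb) (mem_univ w)
  have hgap : h (y - (1 / L) • h' y) - h w ≤
      (1 - a) * (h zb - h w) + (a * ⟪h' y, z - w⟫_ℝ - 1 / (2 * L) * ‖h' y‖ ^ 2) := by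
    linarith
  rw [averaged_eq_gradient_step, half_mul_norm_sub_smul_sub_sq hL.ne' ha0.ne',
    div_eq_mul_one_div (1 - a)]
  linarith [mul_le_mul_of_nonneg_left hgap (by positivity : 0 ≤ 1 / a ^ 2)]

end InnerProductSpace

/-- One-step descent recursion for Nesterov's accelerated gradient method:
for a convex `h` with `L`-Lipschitz gradient and stepsizes with
`1/α² = 1/ᾱ² + 1/α`, setting `z⁺ = z − (1/(Lα))∇h(αz + (1−α)z̄)` and
`z̄⁺ = αz⁺ + (1−α)z̄`, the Lyapunov quantity decreases. -/
theorem nesterov_one_step (d : ℕ)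
    (h : EuclideanSpace ℝ (Fin d) → ℝ)
    (h' : EuclideanSpace ℝ (Fin d) → EuclideanSpace ℝ (Fin d))
    (L : ℝ) (hL : 0 < L)
    (hconv : ConvexOn ℝ Set.univ h)
    (hdiff : ∀ x, HasGradientAt h (h' x) x)
    (hlip : ∀ x x', ‖h' x - h' x'‖ ≤ L * ‖x - x'‖)
    (ab a : ℝ) (hab0 : 0 < ab) (hab1 : ab ≤ 1) (ha0 : 0 < a) (ha1 : a ≤ 1)
    (hrel : 1 / a ^ 2 = 1 / ab ^ 2 + 1 / a)
    (zb z : EuclideanSpace ℝ (Fin d)) :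
    ∀ w : EuclideanSpace ℝ (Fin d),
      L / 2 * ‖(z - (1 / (L * a)) • h' (a • z + (1 - a) • zb)) - w‖ ^ 2 +
        (1 / a ^ 2) *
          (h (a • (z - (1 / (L * a)) • h' (a • z + (1 - a) • zb)) + (1 - a) • zb) - h w) ≤
      L / 2 * ‖z - w‖ ^ 2 + (1 / ab ^ 2) * (h zb - h w) := by
  have hweight : 1 / ab ^ 2 = (1 - a) / a ^ 2 := by rw [eq_sub_of_add_eq hrel.symm]; field_simp
  exact hweight ▸ nesterov_one_step_general hL hconv hdiff hlip ha0 ha1 zb z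
end

section
/- Let d ≥ 1, B ∈ ℝ^{d×d}, and μ̄ ≥ 0, L > 0 satisfy μ̄²·I_d ⪯ Bᵀ·B ⪯ L²·I_d. Let μx, μy ≥ 0 with μx·μy + μ̄² > 0, and let δx, δy ≥ 0. Then the matrix M := μx·μy·I_d + Bᵀ·B is invertible, and δx·μy²·‖M^{−1}e₁‖² + δy·‖B·M^{−1}e₁‖² ≥ (δx·μy² + δy·μ̄²)/(μx·μy + L²)², where e₁ is the first standard basis vector of ℝ^d. -/
open scoped Matrix

/-!
If `v = M⁻¹ e`, then `‖B v‖² ≥ μ² ‖v‖²`, so everything reduces to bounding `‖v‖` from below.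
Since `0 ≺ (μx μy + μ²) I ⪯ M ⪯ K I` with `K = μx μy + L²`, the Rayleigh quotients of `M` lie in
`[0, K]`. Hence `M` has operator norm at most `K`, and `‖e‖ = ‖M v‖ ≤ K ‖v‖`.
-/

section Operator

variable {𝕜 E : Type*} [RCLike 𝕜] [NormedAddCommGroup E] [InnerProductSpace 𝕜 E]

theorem norm_apply_le_of_abs_re_inner_le {T : E →L[𝕜] E} (hT : T.IsSymmetric) {K : ℝ}
    (hK : ∀ x, |RCLike.re (inner 𝕜 (T x) x)| ≤ K * ‖x‖ ^ 2) (x : E) : ‖T x‖ ≤ K * ‖x‖ := by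
  obtain rfl | hx := eq_or_ne x 0
  · simp
  have hK₀ : 0 ≤ K := nonneg_of_mul_nonneg_left ((abs_nonneg _).trans (hK x)) (by positivity)
  refine T.le_of_opNorm_le ?_ x
  rw [T.norm_eq_iSup_rayleighQuotient hT]
  refine ciSup_le fun y => ?_
  rw [ContinuousLinearMap.rayleighQuotient, abs_div, abs_sq]
  exact div_le_of_le_mul₀ (sq_nonneg _) hK₀ (hK y)

end Operator

section Matrix

theorem toLpLin_apply_nonsing_inv {R n : Type*} [CommRing R] [Fintype n] [DecidableEq n]
    {A : Matrix n n R} (hA : IsUnit A) (p : ENNReal) (x : WithLp p (n → R)) :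
    A.toLpLin p p (A⁻¹.toLpLin p p x) = x := by
  rw [← LinearMap.comp_apply, ← Matrix.toLpLin_mul_same,
    A.mul_nonsing_inv (A.isUnit_iff_isUnit_det.1 hA), Matrix.toLpLin_one, LinearMap.id_apply]

open scoped ComplexOrder

variable {𝕜 m n : Type*} [RCLike 𝕜] [DecidableEq n]

theorem posDef_smul_one_add {A : Matrix n n 𝕜} {α c : ℝ}
    (hA : (A - α • (1 : Matrix n n 𝕜)).PosSemidef) (hc : 0 < c + α) :
    (c • (1 : Matrix n n 𝕜) + A).PosDef := by
  have h : c • (1 : Matrix n n 𝕜) + A = (c + α) • (1 : Matrix n n 𝕜) + (A - α • 1) := by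
    module
  rw [h]
  exact (Matrix.PosDef.one.smul hc).add_posSemidef hA

variable [Fintype n]

theorem mul_norm_sq_le_re_inner_of_posSemidef_sub {A : Matrix n n 𝕜} {α : ℝ}
    (hA : (A - α • (1 : Matrix n n 𝕜)).PosSemidef) (x : EuclideanSpace 𝕜 n) :
    α * ‖x‖ ^ 2 ≤ RCLike.re (inner 𝕜 (A.toEuclideanLin x) x) := by
  have h := (Matrix.isPositive_toEuclideanLin_iff.2 hA).re_inner_nonneg_left x
  have hα : (α • (1 : Matrix n n 𝕜)).toEuclideanLin x = (α : 𝕜) • x := by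
    rw [RCLike.real_smul_eq_coe_smul (K := 𝕜), map_smul, Matrix.toLpLin_one, LinearMap.smul_apply,
      LinearMap.id_apply]
  rwa [map_sub, LinearMap.sub_apply, hα, inner_sub_left, inner_smul_left, RCLike.conj_ofReal,
    map_sub, RCLike.re_ofReal_mul, inner_self_eq_norm_sq, sub_nonneg] at h

theorem re_inner_le_mul_norm_sq_of_posSemidef_sub {A : Matrix n n 𝕜} {β : ℝ}
    (hA : (β • (1 : Matrix n n 𝕜) - A).PosSemidef) (x : EuclideanSpace 𝕜 n) :
    RCLike.re (inner 𝕜 (A.toEuclideanLin x) x) ≤ β * ‖x‖ ^ 2 := by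
  have h := mul_norm_sq_le_re_inner_of_posSemidef_sub (A := -A) (α := -β)
    (by simpa [neg_add_eq_sub] using hA) x
  simpa using h

theorem norm_toEuclideanLin_le_of_posSemidef_sub {A : Matrix n n 𝕜} {β : ℝ} (hA : A.PosSemidef)
    (hβ : (β • (1 : Matrix n n 𝕜) - A).PosSemidef) (x : EuclideanSpace 𝕜 n) :
    ‖A.toEuclideanLin x‖ ≤ β * ‖x‖ := by
  have hpos := Matrix.isPositive_toEuclideanLin_iff.2 hA
  refine norm_apply_le_of_abs_re_inner_le (T := Matrix.toEuclideanCLM (𝕜 := 𝕜) A)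
    hpos.isSymmetric (fun y => ?_) x
  exact (abs_of_nonneg (hpos.re_inner_nonneg_left y)).trans_le
    (re_inner_le_mul_norm_sq_of_posSemidef_sub hβ y)

theorem re_inner_toEuclideanLin_conjTranspose_mul_self [Fintype m] (B : Matrix m n 𝕜)
    (x : EuclideanSpace 𝕜 n) :
    RCLike.re (inner 𝕜 ((Bᴴ * B).toEuclideanLin x) x) = ‖B.toEuclideanLin x‖ ^ 2 := by
  classical
  rw [Matrix.toLpLin_mul 2 2 2, LinearMap.comp_apply,
    Matrix.toEuclideanLin_conjTranspose_eq_adjoint, LinearMap.adjoint_inner_left,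
    inner_self_eq_norm_sq]

theorem initial_distance_lower_bound_general [Fintype m] (B : Matrix m n 𝕜) {α β a b c : ℝ}
    (hlow : (Bᴴ * B - α • (1 : Matrix n n 𝕜)).PosSemidef)
    (hup : (β • (1 : Matrix n n 𝕜) - Bᴴ * B).PosSemidef)
    (hc : 0 < c + α) (hb : 0 ≤ b) (hab : 0 ≤ a + b * α) :
    IsUnit (c • (1 : Matrix n n 𝕜) + Bᴴ * B) ∧ ∀ e : EuclideanSpace 𝕜 n,
      (a + b * α) / (c + β) ^ 2 * ‖e‖ ^ 2 ≤
        a * ‖(c • (1 : Matrix n n 𝕜) + Bᴴ * B)⁻¹.toEuclideanLin e‖ ^ 2 +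
          b * ‖B.toEuclideanLin ((c • (1 : Matrix n n 𝕜) + Bᴴ * B)⁻¹.toEuclideanLin e)‖ ^ 2 := by
  set M := c • (1 : Matrix n n 𝕜) + Bᴴ * B with hM
  have hMpos : M.PosDef := posDef_smul_one_add hlow hc
  refine ⟨hMpos.isUnit, fun e => ?_⟩
  set v := M⁻¹.toEuclideanLin e with hv
  have hMup : ((c + β) • (1 : Matrix n n 𝕜) - M).PosSemidef := by
    rwa [hM, add_smul, add_sub_add_left_eq_sub]
  have hBv : α * ‖v‖ ^ 2 ≤ ‖B.toEuclideanLin v‖ ^ 2 :=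
    re_inner_toEuclideanLin_conjTranspose_mul_self B v ▸
      mul_norm_sq_le_re_inner_of_posSemidef_sub hlow v
  have he : ‖e‖ ≤ (c + β) * ‖v‖ := by
    simpa only [hv, toLpLin_apply_nonsing_inv hMpos.isUnit] using
      norm_toEuclideanLin_le_of_posSemidef_sub hMpos.posSemidef hMup v
  calc (a + b * α) / (c + β) ^ 2 * ‖e‖ ^ 2
      = (a + b * α) * (‖e‖ ^ 2 / (c + β) ^ 2) := by ring
    _ ≤ (a + b * α) * ‖v‖ ^ 2 := by
      gcongr
      refine div_le_of_le_mul₀ (sq_nonneg _) (sq_nonneg _) ?_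
      rw [← mul_pow, mul_comm]
      gcongr
    _ = a * ‖v‖ ^ 2 + b * (α * ‖v‖ ^ 2) := by ring
    _ ≤ a * ‖v‖ ^ 2 + b * ‖B.toEuclideanLin v‖ ^ 2 := by gcongr

end Matrix

/-- If `μ̄² I ⪯ BᵀB ⪯ L² I` and `μx μy + μ̄² > 0`, then `M = μxμy I + BᵀB` is
invertible, and `δx μy² ‖M⁻¹e₁‖² + δy ‖B M⁻¹ e₁‖² ≥ (δxμy² + δyμ̄²)/(μxμy + L²)²`. -/
theorem initial_distance_lower_bound (d : ℕ) (hd : 1 ≤ d)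
    (B : Matrix (Fin d) (Fin d) ℝ) (μ L : ℝ) (hμ : 0 ≤ μ) (hL : 0 < L)
    (hlow : Matrix.PosSemidef (Bᵀ * B - μ ^ 2 • (1 : Matrix (Fin d) (Fin d) ℝ)))
    (hup : Matrix.PosSemidef (L ^ 2 • (1 : Matrix (Fin d) (Fin d) ℝ) - Bᵀ * B))
    (μx μy δx δy : ℝ) (hμx : 0 ≤ μx) (hμy : 0 ≤ μy)
    (hpos : 0 < μx * μy + μ ^ 2) (hδx : 0 ≤ δx) (hδy : 0 ≤ δy) :
    IsUnit ((μx * μy) • (1 : Matrix (Fin d) (Fin d) ℝ) + Bᵀ * B) ∧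
      δx * μy ^ 2 *
          ‖Matrix.toEuclideanLin (((μx * μy) • (1 : Matrix (Fin d) (Fin d) ℝ) + Bᵀ * B)⁻¹)
            (EuclideanSpace.single (⟨0, by omega⟩ : Fin d) (1 : ℝ))‖ ^ 2 +
        δy *
          ‖Matrix.toEuclideanLin B
            (Matrix.toEuclideanLin (((μx * μy) • (1 : Matrix (Fin d) (Fin d) ℝ) + Bᵀ * B)⁻¹)
              (EuclideanSpace.single (⟨0, by omega⟩ : Fin d) (1 : ℝ)))‖ ^ 2 ≥
      (δx * μy ^ 2 + δy * μ ^ 2) / (μx * μy + L ^ 2) ^ 2 := by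
  obtain ⟨hM, h⟩ := initial_distance_lower_bound_general B hlow hup hpos hδy
    (by positivity : 0 ≤ δx * μy ^ 2 + δy * μ ^ 2)
  exact ⟨hM, by simpa using h (EuclideanSpace.single ⟨0, hd⟩ 1)⟩
end
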